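/- Let r be a fixed positive integer. There exist constants c_r > 0, C_r > 0 and p₀(r) such that for every prime p > p₀(r) and every subgroup G of 𝔽_p* with |G| > C_r·p^(1−1/(2r)), the number of pairs (a, b) with a ∈ G, b ∈ 𝔽_p, b ≠ 0, and a, a+b, a+2b, …, a+rb all in G is at least c_r·(|G|/p)^r·p·|G|. -/

import Mathlib

/-!
Writing an arithmetic progression in `G` as `a * (1 + i * x)` with `a ∈ G`, one has to count the
`x` for which `1 + x, …, 1 + r * x` all lie in `G`. The indicator function of `G` is the average of
the characters trivial on `G`, so this count is an average of the sums `∑ x, ∏ i, χ i (1 + i * x)`,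
in which the principal tuple gives the main term and Weil's bound `(r - 1) * √q` controls the rest.

Weil's bound is proved by Stepanov's method. Over an extension `F` of degree `k` of the field `K`
with `q` elements, an auxiliary polynomial that vanishes to high order at the `x` for which all
norms `N (t i - x)` are prescribed bounds their number from above; since these numbers add up to
`q ^ k`, they are all close to their mean and the lifted character sums are `O(q ^ (k / 2))`. By
Newton's identity the lifted sums are the power sums of the inverse roots of an `L`-function, a
polynomial of degree less than `r`, so every inverse root has absolute value at most `√q`.
-/

open Finset Polynomial

namespace CharacterSum

noncomputable section

section SubstPow

variable {R : Type*} [CommRing R]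

/-- The substitution `c(Y, X) ↦ c(X ^ Q, X)` on bivariate polynomials `c ∈ R[Y][X]`. The variable
`Y` replaced by `X ^ Q` is the inner one, so that `natDegree` is the degree in the variable `X`. -/
def substPow (R : Type*) [CommRing R] (Q : ℕ) : R[X][X] →+* R[X] :=
  eval₂RingHom (expand R Q : R[X] →+* R[X]) X

lemma substPow_C (Q : ℕ) (f : R[X]) : substPow R Q (C f) = expand R Q f := by
  simp [substPow]

lemma substPow_map_C (Q : ℕ) (f : R[X]) : substPow R Q (f.map C) = f := by
  have hC : ((expand R Q : R[X] →+* R[X]).comp C : R →+* R[X]) = C := RingHom.ext fun a => by simp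
  rw [substPow, coe_eval₂RingHom, eval₂_map, hC, eval₂_C_X]

lemma coeff_substPow {Q : ℕ} {c : R[X][X]} (hc : c.natDegree < Q) {a e : ℕ} (he : e < Q) :
    (substPow R Q c).coeff (Q * a + e) = (c.coeff e).coeff a := by
  have hQ : 0 < Q := Nat.zero_lt_of_lt he
  rw [substPow, coe_eval₂RingHom, eval₂_eq_sum_range' _ hc, finsetSum_coeff,
    sum_eq_single e]
  · simp [coeff_mul_X_pow, coeff_expand hQ, hQ]
  · intro n hn hne
    rw [mem_range] at hn
    rw [coeff_mul_X_pow', RingHom.coe_coe, coeff_expand hQ]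
    split_ifs with hle hdvd
    · refine absurd (Nat.ModEq.eq_of_lt_of_lt ?_ hn he) hne
      exact ((Nat.modEq_iff_dvd' hle).mpr hdvd).trans (by simp [Nat.ModEq])
    · rfl
    · rfl
  · exact fun h => absurd (mem_range.mpr he) h

lemma eq_zero_of_substPow_eq_zero {Q : ℕ} {c : R[X][X]} (hc : c.natDegree < Q)
    (h : substPow R Q c = 0) : c = 0 := by
  ext e a
  by_cases he : e < Q
  · rw [← coeff_substPow hc he, h]; simp
  · rw [coeff_eq_zero_of_natDegree_lt (hc.trans_le (not_lt.mp he))]; simp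

end SubstPow

section RootProd

variable {R ι : Type*} [CommRing R] [Fintype ι] {n : ℕ}

/-- The polynomial `∏ i, (X - t i) ^ j i`. The exponents are bounded by `n - 1`, so that `Fin.rev`
yields the complementary product. -/
def rootProd (t : ι → R) (j : ι → Fin n) : R[X] :=
  ∏ i, (X - C (t i)) ^ (j i : ℕ)

lemma monic_rootProd (t : ι → R) (j : ι → Fin n) : (rootProd t j).Monic :=
  monic_prod_of_monic _ _ fun _ _ => (monic_X_sub_C _).pow _

lemma natDegree_rootProd_le (t : ι → R) (j : ι → Fin n) :
    (rootProd t j).natDegree ≤ Fintype.card ι * n := by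
  have hfactor (i : ι) : ((X - C (t i)) ^ (j i : ℕ)).natDegree ≤ n :=
    natDegree_pow_le.trans <| by
      simpa using Nat.mul_le_mul (j i).isLt.le (natDegree_X_sub_C_le (t i))
  refine (natDegree_prod_le univ fun i => (X - C (t i)) ^ (j i : ℕ)).trans ?_
  simpa using sum_le_card_nsmul univ _ n fun i _ => hfactor i

lemma rootProd_mul_rootProd_rev (t : ι → R) (j : ι → Fin n) :
    rootProd t j * rootProd t (Fin.rev ∘ j) = (∏ i, (X - C (t i))) ^ (n - 1) := by
  rw [rootProd, rootProd, ← prod_mul_distrib, ← prod_pow]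
  refine prod_congr rfl fun i _ => ?_
  rw [← pow_add, Function.comp_apply, Fin.val_rev]
  congr 1
  omega

variable [IsDomain R]

lemma count_roots_rootProd [DecidableEq R] {t : ι → R} (ht : Function.Injective t) (j : ι → Fin n)
    (i : ι) : (rootProd t j).roots.count (t i) = j i := by
  classical
  rw [rootProd, roots_prod _ _ (monic_rootProd t j).ne_zero, Multiset.count_bind]
  simp only [roots_pow, roots_X_sub_C, Multiset.count_nsmul, Multiset.count_singleton, ht.eq_iff,
    mul_ite, mul_one, mul_zero]
  exact sum_ite_eq univ i _ |>.trans (if_pos (mem_univ i))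

lemma eq_of_pow_mul_rootProd_eq {t : ι → R} (ht : Function.Injective t) {f g : R[X]}
    (hf : f ≠ 0) (hg : g ≠ 0) {j j' : ι → Fin n}
    (h : f ^ n * rootProd t j = g ^ n * rootProd t j') : j = j' := by
  classical
  funext i
  have hcount : ∀ {f : R[X]}, f ≠ 0 → ∀ j : ι → Fin n,
      (f ^ n * rootProd t j).roots.count (t i) = n * f.roots.count (t i) + j i := by
    intro f hf j
    rw [roots_mul (mul_ne_zero (pow_ne_zero _ hf) (monic_rootProd t j).ne_zero), Multiset.count_add,
      roots_pow, Multiset.count_nsmul, count_roots_rootProd ht]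
  have hmod := congrArg (fun p : R[X] => p.roots.count (t i) % n) h
  simp only [hcount hf, hcount hg, Nat.mul_add_mod, Nat.mod_eq_of_lt (Fin.isLt _)] at hmod
  exact Fin.ext hmod

end RootProd

section Twist

variable {K ι : Type*} [Field K] [Fintype K] [Fintype ι]

local notation "q" => Fintype.card K

/-- The exponent `1 + n + ⋯ + n ^ (k - 1)`, which for `n = #K` is that of the norm to `K` from its
extension of degree `k`. -/
def repunit (n k : ℕ) : ℕ := ∑ i ∈ range k, n ^ i

lemma mul_repunit_add_one (n k : ℕ) : n * repunit n k + 1 = repunit n k + n ^ k := by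
  rw [repunit, ← geom_sum_succ, sum_range_succ]

lemma repunit_add (n a b : ℕ) : repunit n (a + b) = repunit n a + n ^ a * repunit n b := by
  simp only [repunit, sum_range_add, mul_sum, pow_add]

lemma sub_two_mul_repunit_le {n : ℕ} (hn : 2 ≤ n) (k : ℕ) : (n - 2) * repunit n k ≤ n ^ k := by
  have := mul_repunit_add_one n k
  obtain ⟨a, rfl⟩ := Nat.exists_eq_add_of_le hn
  rw [Nat.add_sub_cancel_left]
  nlinarith

lemma expand_card_pow (k : ℕ) (f : K[X]) : expand K (q ^ k) f = f ^ q ^ k := by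
  induction k with
  | zero => simp
  | succ k ih => rw [pow_succ, expand_mul, FiniteField.expand_card, map_pow, ih, ← pow_mul]

/-- Multiplying the `q`-th power of a term `c(X ^ Q, X) * H_j ^ N`, where `H_j = rootProd t j`,
`Q = q ^ k` and `N = repunit q k`, by the full product `∏ i, (X - t i) ^ (q - 2)` gives another such
term, whose coefficient polynomial is `twist t j c`. -/
def twist (t : ι → K) (j : ι → Fin (q - 1)) (c : K[X][X]) : K[X][X] :=
  c ^ q * (rootProd t (Fin.rev ∘ j)).map C * C (rootProd t j)

lemma natDegree_twist_le (t : ι → K) (j : ι → Fin (q - 1)) {c : K[X][X]} {E : ℕ}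
    (hc : c.natDegree ≤ E) : (twist t j c).natDegree ≤ q * E + Fintype.card ι * q := by
  refine (natDegree_mul_C_le _ _).trans
    (natDegree_mul_le_of_le (natDegree_pow_le_of_le _ hc) ?_)
  exact natDegree_map_le.trans <| (natDegree_rootProd_le _ _).trans <|
    Nat.mul_le_mul_left _ (Nat.sub_le _ _)

lemma substPow_twist_mul (t : ι → K) (j : ι → Fin (q - 1)) (c : K[X][X]) (k : ℕ) :
    substPow K (q ^ k) (twist t j c) * rootProd t j ^ repunit q k =
      (∏ i, (X - C (t i))) ^ (q - 1 - 1) *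
        (substPow K (q ^ k) c * rootProd t j ^ repunit q k) ^ q := by
  have hpow : rootProd t j ^ q ^ k * rootProd t j ^ repunit q k =
      rootProd t j * (rootProd t j ^ repunit q k) ^ q := by
    rw [← pow_add, add_comm, ← mul_repunit_add_one, pow_succ', pow_mul']
  rw [← rootProd_mul_rootProd_rev t j, twist, map_mul, map_mul, map_pow, substPow_map_C, substPow_C,
    expand_card_pow, mul_pow]
  linear_combination (substPow K (q ^ k) c ^ q * rootProd t (Fin.rev ∘ j)) * hpow

lemma sum_substPow_twist_eq_zero (t : ι → K) {k : ℕ} {J : Finset (ι → Fin (q - 1))}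
    {c : (ι → Fin (q - 1)) → K[X][X]}
    (h : ∑ j ∈ J, substPow K (q ^ k) (c j) * rootProd t j ^ repunit q k = 0) :
    ∑ j ∈ J, substPow K (q ^ k) (twist t j (c j)) * rootProd t j ^ repunit q k = 0 := by
  have hfrob := map_sum (FiniteField.frobeniusAlgHom K K[X])
    (fun j => substPow K (q ^ k) (c j) * rootProd t j ^ repunit q k) J
  rw [h, map_zero] at hfrob
  simp only [FiniteField.coe_frobeniusAlgHom] at hfrob
  simp only [substPow_twist_mul, ← mul_sum, ← hfrob, mul_zero]

lemma eq_of_twist_mul_eq {t : ι → K} (ht : Function.Injective t) {c d : K[X][X]} (hc : c ≠ 0)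
    (hd : d ≠ 0) {j j' : ι → Fin (q - 1)} (h : twist t j c * d = c * twist t j' d) : j = j' := by
  have hq (f : K[X]) : f ^ q = f ^ (q - 1) * f := by
    rw [← pow_succ, Nat.sub_add_cancel Fintype.card_pos]
  have hlead := congrArg leadingCoeff h
  simp only [twist, leadingCoeff_mul, leadingCoeff_pow, leadingCoeff_C,
    ((monic_rootProd t _).map C).leadingCoeff, mul_one, hq] at hlead
  refine eq_of_pow_mul_rootProd_eq ht (leadingCoeff_ne_zero.mpr hc) (leadingCoeff_ne_zero.mpr hd)
    (mul_left_cancel₀ (mul_ne_zero (leadingCoeff_ne_zero.mpr hc) (leadingCoeff_ne_zero.mpr hd)) ?_)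
  linear_combination hlead

lemma sum_eliminate_eq_zero (t : ι → K) {k : ℕ} {j₀ : ι → Fin (q - 1)}
    {J : Finset (ι → Fin (q - 1))} (hj₀ : j₀ ∉ J) {c : (ι → Fin (q - 1)) → K[X][X]}
    (h : ∑ j ∈ cons j₀ J hj₀, substPow K (q ^ k) (c j) * rootProd t j ^ repunit q k = 0) :
    ∑ j ∈ J, substPow K (q ^ k) (twist t j₀ (c j₀) * c j - c j₀ * twist t j (c j)) *
      rootProd t j ^ repunit q k = 0 := by
  have htwist := sum_substPow_twist_eq_zero t h
  rw [sum_cons] at h htwist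
  simp only [map_sub, map_mul, sub_mul, mul_assoc, sum_sub_distrib, ← mul_sum]
  linear_combination substPow K (q ^ k) (twist t j₀ (c j₀)) * h -
    substPow K (q ^ k) (c j₀) * htwist

lemma eq_zero_of_sum_substPow_mul_rootProd_pow_eq_zero {t : ι → K} (ht : Function.Injective t)
    {k : ℕ} (J : Finset (ι → Fin (q - 1))) {E : ℕ} (hE : 1 ≤ E)
    (hEJ : E * (q + 1 + Fintype.card ι * q) ^ #J < q ^ k) {c : (ι → Fin (q - 1)) → K[X][X]}
    (hc : ∀ j ∈ J, (c j).natDegree ≤ E)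
    (hsum : ∑ j ∈ J, substPow K (q ^ k) (c j) * rootProd t j ^ repunit q k = 0) :
    ∀ j ∈ J, c j = 0 := by
  induction J using Finset.cons_induction generalizing E c with
  | empty => simp
  | cons j₀ J hj₀ ih =>
    rw [forall_mem_cons] at hc ⊢
    obtain ⟨hc₀, hc⟩ := hc
    set B := q + 1 + Fintype.card ι * q with hB
    rw [card_cons, pow_succ', ← mul_assoc] at hEJ
    have hle : E ≤ E * B := Nat.le_mul_of_pos_right E (by lia)
    have hEJ' : E * B ^ #J < q ^ k := (Nat.mul_le_mul_right _ hle).trans_lt hEJ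
    have hEk : E < q ^ k := (Nat.le_mul_of_pos_right E (by positivity)).trans_lt hEJ'
    have hdeg (j) (hj : j ∈ J) :
        (twist t j₀ (c j₀) * c j - c j₀ * twist t j (c j)).natDegree ≤ E * B := by
      refine (natDegree_sub_le_of_le
        (natDegree_mul_le_of_le (natDegree_twist_le t j₀ hc₀) (hc j hj))
        (natDegree_mul_le_of_le hc₀ (natDegree_twist_le t j (hc j hj)))).trans ?_
      rw [add_comm E, max_self, hB]
      nlinarith [Nat.zero_le (Fintype.card ι * q)]
    have heliminated := ih (hE.trans hle) hEJ hdeg (sum_eliminate_eq_zero t hj₀ hsum)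
    rw [sum_cons] at hsum
    have hc₀_zero : c j₀ = 0 := by
      by_contra hne
      have hzero (j) (hj : j ∈ J) : c j = 0 := by
        by_contra hcj
        refine hj₀ (eq_of_twist_mul_eq ht hne hcj (sub_eq_zero.mp (heliminated j hj)) ▸ hj)
      rw [sum_eq_zero fun j hj => by rw [hzero j hj, map_zero, zero_mul], add_zero] at hsum
      have hsubst := (mul_eq_zero.mp hsum).resolve_right
        (pow_ne_zero _ (monic_rootProd t j₀).ne_zero)
      exact hne (eq_zero_of_substPow_eq_zero (hc₀.trans_lt hEk) hsubst)
    rw [hc₀_zero, map_zero, zero_mul, zero_add] at hsum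
    exact ⟨hc₀_zero, ih hE hEJ' hc hsum⟩

end Twist

section ResiduePart

variable {R : Type*} [CommRing R]

/-- The part of `f` whose exponents are congruent to `b` modulo `M`, divided by `X ^ b` (for
`b < M`). -/
def residuePart (M b : ℕ) (f : R[X]) : R[X] :=
  ∑ n ∈ range (f.natDegree + 1) with n % M = b, C (f.coeff n) * X ^ (n - b)

lemma natDegree_residuePart_le (M b : ℕ) (f : R[X]) :
    (residuePart M b f).natDegree ≤ f.natDegree := by
  refine natDegree_sum_le_of_forall_le _ _ fun n hn => (natDegree_C_mul_X_pow_le _ _).trans ?_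
  rw [mem_filter, mem_range] at hn
  lia

lemma aeval_eq_sum_residuePart {A : Type*} [CommRing A] [Algebra R A] {M : ℕ} (hM : 0 < M)
    {ξ x : A} (h : ξ ^ M = x ^ M) (f : R[X]) :
    aeval ξ f = ∑ b ∈ range M, ξ ^ b * aeval x (residuePart M b f) := by
  have hterm (b n : ℕ) (hn : n % M = b) : ξ ^ n = ξ ^ b * x ^ (n - b) := by
    have hsub : n - b = M * (n / M) := by
      have := Nat.mod_add_div n M
      lia
    rw [hsub, pow_mul, ← h, ← pow_mul, ← pow_add, ← hn, Nat.mod_add_div]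
  rw [aeval_eq_sum_range, ← sum_fiberwise_of_maps_to
    (fun n _ => mem_range.mpr (Nat.mod_lt n hM))]
  refine sum_congr rfl fun b _ => ?_
  rw [residuePart, map_sum, mul_sum]
  refine sum_congr rfl fun n hn => ?_
  rw [hterm b n (mem_filter.mp hn).2, map_mul, aeval_C, map_pow, aeval_X, Algebra.smul_def]
  ring

lemma exists_ne_zero_sum_smul_eq_zero {K U : Type*} [Field K] [Fintype U] {L M : ℕ}
    (W : U → ℕ → K[X]) (hdeg : ∀ v b, (W v b).natDegree < L) (hcard : M * L < Fintype.card U) :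
    ∃ u : U → K, u ≠ 0 ∧ ∀ b < M, ∑ v, u v • W v b = 0 := by
  have hdep : ¬ LinearIndependent K fun v (i : Fin M × Fin L) => (W v i.1).coeff i.2 := by
    intro hli
    have := hli.fintype_card_le_finrank
    rw [Module.finrank_fintype_fun_eq_card, Fintype.card_prod, Fintype.card_fin,
      Fintype.card_fin] at this
    lia
  obtain ⟨u, hu, v, hv⟩ := Fintype.not_linearIndependent_iff.mp hdep
  refine ⟨u, fun h => hv (congrFun h v), fun b hb => Polynomial.ext fun n => ?_⟩
  by_cases hn : n < L
  · simpa using congrFun hu (⟨b, hb⟩, ⟨n, hn⟩)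
  · simp [coeff_eq_zero_of_natDegree_lt ((hdeg _ b).trans_le (not_lt.mp hn))]

end ResiduePart

section Bivariate

variable {K J : Type*} [Field K] {A D : ℕ}

/-- The bivariate polynomial `∑ u (a, e, j) Y ^ a X ^ e`, for fixed `j`. -/
def bivariate (u : Fin A × Fin D × J → K) (j : J) : K[X][X] :=
  ∑ a : Fin A, ∑ e : Fin D, monomial e (monomial a (u (a, e, j)))

lemma coeff_bivariate (u : Fin A × Fin D × J → K) (j : J) (a : Fin A) (e : Fin D) :
    ((bivariate u j).coeff e).coeff a = u (a, e, j) := by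
  simp [bivariate, coeff_monomial, Fin.val_inj]

lemma eq_zero_of_bivariate_eq_zero {u : Fin A × Fin D × J → K} (h : ∀ j, bivariate u j = 0) :
    u = 0 := by
  funext ⟨a, e, j⟩
  rw [← coeff_bivariate u j a e, h]
  rfl

lemma natDegree_bivariate_le (u : Fin A × Fin D × J → K) (j : J) :
    (bivariate u j).natDegree ≤ D :=
  natDegree_sum_le_of_forall_le _ _ fun _ _ => natDegree_sum_le_of_forall_le _ _ fun e _ =>
    (natDegree_monomial_le _).trans e.isLt.le

lemma substPow_bivariate (Q : ℕ) (u : Fin A × Fin D × J → K) (j : J) :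
    substPow K Q (bivariate u j) =
      ∑ a : Fin A, ∑ e : Fin D, C (u (a, e, j)) * X ^ (Q * a + e : ℕ) := by
  simp only [bivariate, map_sum, substPow, coe_eval₂RingHom, eval₂_monomial, RingHom.coe_coe,
    expand_monomial]
  simp only [← C_mul_X_pow_eq_monomial, pow_add, mul_assoc, mul_comm Q]

end Bivariate

lemma card_mul_le_natDegree {R : Type*} [CommRing R] [IsDomain R] {P : R[X]} (hP : P ≠ 0)
    {T : Finset R} {M : ℕ} (h : ∀ x ∈ T, (X - C x) ^ M ∣ P) : #T * M ≤ P.natDegree := by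
  classical
  have hle : M • T.val ≤ P.roots := by
    rw [Multiset.le_iff_count]
    intro x
    rw [Multiset.count_nsmul, count_roots]
    by_cases hx : x ∈ T
    · rw [Multiset.count_eq_one_of_mem T.nodup hx, mul_one]
      exact (le_rootMultiplicity_iff hP).mpr (h x hx)
    · rw [Multiset.count_eq_zero_of_notMem hx]
      exact Nat.zero_le _
  simpa [mul_comm] using (Multiset.card_le_card hle).trans (card_roots' P)

section Stepanov

variable {K ι : Type*} [Field K] [Fintype K] [Fintype ι] {A D : ℕ}

local notation "q" => Fintype.card K

/-- The building blocks `X ^ (Q * a + e) * H_j ^ N` of Stepanov's auxiliary polynomial, where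
`H_j = rootProd t j`, `Q = q ^ k` and `N = repunit q k`. -/
def auxTerm (t : ι → K) (k : ℕ) (v : Fin A × Fin D × (ι → Fin (q - 1))) : K[X] :=
  X ^ (q ^ k * v.1 + v.2.1) * rootProd t v.2.2 ^ repunit q k

lemma natDegree_rootProd_pow_add_le (t : ι → K) (j : ι → Fin (q - 1)) (k : ℕ) :
    (rootProd t (Fin.rev ∘ j) ^ repunit q k).natDegree + (rootProd t j ^ repunit q k).natDegree ≤
      Fintype.card ι * q ^ k := by
  rw [← natDegree_mul (pow_ne_zero _ (monic_rootProd t _).ne_zero)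
    (pow_ne_zero _ (monic_rootProd t _).ne_zero), ← mul_pow, mul_comm, rootProd_mul_rootProd_rev,
    ← pow_mul, natDegree_pow, natDegree_prod_of_monic _ _ fun i _ => monic_X_sub_C _]
  simp only [natDegree_X_sub_C, sum_const, card_univ, smul_eq_mul, mul_one]
  rw [mul_comm]
  exact Nat.mul_le_mul_left _ (sub_two_mul_repunit_le Fintype.one_lt_card k)

lemma natDegree_auxTerm_le (t : ι → K) {k : ℕ} (hD : D ≤ q ^ k)
    (v : Fin A × Fin D × (ι → Fin (q - 1))) :
    (auxTerm t k v).natDegree ≤ q ^ k * (A + Fintype.card ι) := by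
  obtain ⟨a, e, j⟩ := v
  refine natDegree_mul_le.trans ?_
  have hroot := natDegree_rootProd_pow_add_le t j k
  have hpow : q ^ k * a + e ≤ q ^ k * A := by
    have := Nat.mul_le_mul_left (q ^ k) a.isLt
    have := e.isLt
    lia
  rw [natDegree_X_pow]
  lia

/-- The polynomials `W` for which
`(∏ i, (x - t i)) ^ ((q - 2) * N) * auxTerm = ∑ b, ξ ^ b * W_b(x)`, where `N = repunit q μ`,
whenever `ξ ^ (q ^ μ) = x ^ (q ^ μ)` and `x - t i` has norm `z i` for all `i`. -/
def auxResidue (t z : ι → K) (μ : ℕ) (v : Fin A × Fin D × (ι → Fin (q - 1))) (b : ℕ) : K[X] :=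
  C (∏ i, z i ^ (v.2.2 i : ℕ)) * X ^ (v.1 : ℕ) *
    (rootProd t (Fin.rev ∘ v.2.2) ^ repunit q μ *
      residuePart (q ^ μ) b (X ^ (v.2.1 : ℕ) * rootProd t v.2.2 ^ repunit q μ))

lemma natDegree_auxResidue_lt (t z : ι → K) (μ : ℕ) (v : Fin A × Fin D × (ι → Fin (q - 1)))
    (b : ℕ) : (auxResidue t z μ v b).natDegree < A + D + Fintype.card ι * q ^ μ := by
  obtain ⟨a, e, j⟩ := v
  have hroot := natDegree_rootProd_pow_add_le t j μ
  have hres : (residuePart (q ^ μ) b (X ^ (e : ℕ) * rootProd t j ^ repunit q μ)).natDegree ≤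
      e + (rootProd t j ^ repunit q μ).natDegree :=
    (natDegree_residuePart_le _ _ _).trans (natDegree_mul_le_of_le (natDegree_X_pow_le _) le_rfl)
  refine (natDegree_mul_le_of_le (natDegree_C_mul_X_pow_le _ _)
    (natDegree_mul_le_of_le le_rfl hres)).trans_lt ?_
  have := a.isLt
  have := e.isLt
  lia

lemma sum_smul_auxTerm [DecidableEq ι] (t : ι → K) (k : ℕ)
    (u : Fin A × Fin D × (ι → Fin (q - 1)) → K) :
    ∑ v, u v • auxTerm t k v =
      ∑ j, substPow K (q ^ k) (bivariate u j) * rootProd t j ^ repunit q k := by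
  simp only [auxTerm, substPow_bivariate, sum_mul, Fintype.sum_prod_type, smul_eq_C_mul, mul_assoc]
  exact (sum_congr rfl fun _ _ => sum_comm).trans sum_comm

lemma sum_smul_auxTerm_ne_zero [DecidableEq ι] {t : ι → K} (ht : Function.Injective t) {k : ℕ}
    (hD : 1 ≤ D)
    (hDk : D * (q + 1 + Fintype.card ι * q) ^ (q - 1) ^ Fintype.card ι < q ^ k)
    {u : Fin A × Fin D × (ι → Fin (q - 1)) → K} (hu : u ≠ 0) : ∑ v, u v • auxTerm t k v ≠ 0 := by
  intro hsum
  rw [sum_smul_auxTerm] at hsum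
  refine hu (eq_zero_of_bivariate_eq_zero fun j => ?_)
  exact eq_zero_of_sum_substPow_mul_rootProd_pow_eq_zero ht univ hD (by simpa using hDk)
    (fun j _ => natDegree_bivariate_le u j) hsum j (mem_univ j)

section Vanishing

variable {S : Type*} [CommRing S] [Algebra K S] {t z : ι → K} {ξ x : S} {k μ : ℕ}

lemma aeval_rootProd_pow_repunit
    (hz : ∀ i, (x - algebraMap K S (t i)) ^ repunit q k = algebraMap K S (z i))
    (j : ι → Fin (q - 1)) :
    aeval x (rootProd t j) ^ repunit q k = algebraMap K S (∏ i, z i ^ (j i : ℕ)) := by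
  simp only [rootProd, map_prod, map_pow, map_sub, aeval_X, aeval_C, ← prod_pow, ← hz, ← pow_mul,
    mul_comm]

lemma aeval_pow_repunit_eq (hμ : μ ≤ k) (hξ : ξ ^ q ^ μ = x ^ q ^ μ) (f : K[X]) :
    aeval ξ f ^ repunit q k =
      aeval ξ f ^ repunit q μ * aeval x f ^ (q ^ μ * repunit q (k - μ)) := by
  have hpow : aeval ξ f ^ q ^ μ = aeval x f ^ q ^ μ := by
    rw [← map_pow, ← map_pow, ← expand_card_pow, expand_aeval, expand_aeval, hξ]
  rw [pow_mul, ← hpow, ← pow_mul, ← pow_add, ← repunit_add, Nat.add_sub_cancel' hμ]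

lemma mul_aeval_auxTerm (hμ : μ ≤ k) (hξ : ξ ^ q ^ μ = x ^ q ^ μ) (hx : x ^ q ^ k = x)
    (hz : ∀ i, (x - algebraMap K S (t i)) ^ repunit q k = algebraMap K S (z i))
    (v : Fin A × Fin D × (ι → Fin (q - 1))) :
    aeval x (∏ i, (X - C (t i)) : K[X]) ^ ((q - 1 - 1) * repunit q μ) * aeval ξ (auxTerm t k v) =
      ∑ b ∈ range (q ^ μ), ξ ^ b * aeval x (auxResidue t z μ v b) := by
  obtain ⟨a, e, j⟩ := v
  have hξx : ξ ^ q ^ k = x := by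
    rw [← Nat.add_sub_cancel' hμ, pow_add, pow_mul, hξ, ← pow_mul, ← pow_add,
      Nat.add_sub_cancel' hμ, hx]
  have hnorm := aeval_rootProd_pow_repunit hz j
  rw [aeval_pow_repunit_eq hμ rfl] at hnorm
  have hres := aeval_eq_sum_residuePart (pow_pos Fintype.card_pos μ) hξ
    (X ^ (e : ℕ) * rootProd t j ^ repunit q μ)
  have hterm (b : ℕ) : ξ ^ b * aeval x (auxResidue t z μ (a, e, j) b) =
      algebraMap K S (∏ i, z i ^ (j i : ℕ)) * x ^ (a : ℕ) *
        aeval x (rootProd t (Fin.rev ∘ j)) ^ repunit q μ *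
        (ξ ^ b * aeval x (residuePart (q ^ μ) b (X ^ (e : ℕ) * rootProd t j ^ repunit q μ))) := by
    simp only [auxResidue, map_mul, map_pow, aeval_C, aeval_X]
    ring
  simp only [hterm, ← mul_sum]
  rw [← hres, pow_mul, ← map_pow, ← rootProd_mul_rootProd_rev t j, auxTerm, ← hnorm]
  simp only [map_mul, map_pow, aeval_X, pow_add, pow_mul ξ, hξx,
    aeval_pow_repunit_eq hμ hξ (rootProd t j)]
  ring

lemma aeval_sum_smul_auxTerm_eq_zero [DecidableEq ι] (hμ : μ ≤ k) (hk : k ≠ 0)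
    (hξ : ξ ^ q ^ μ = x ^ q ^ μ) (hx : x ^ q ^ k = x)
    (hz : ∀ i, (x - algebraMap K S (t i)) ^ repunit q k = algebraMap K S (z i)) (hz0 : ∀ i, z i ≠ 0)
    {u : Fin A × Fin D × (ι → Fin (q - 1)) → K}
    (hu : ∀ b < q ^ μ, ∑ v, u v • auxResidue t z μ v b = 0) :
    aeval ξ (∑ v, u v • auxTerm t k v) = 0 := by
  have hunit : IsUnit (aeval x (∏ i, (X - C (t i)) : K[X]) ^ ((q - 1 - 1) * repunit q μ)) := by
    have hrep : repunit q k ≠ 0 := by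
      have := mul_repunit_add_one q k
      have := Nat.one_lt_pow hk (Fintype.one_lt_card (α := K))
      rintro h0
      lia
    refine IsUnit.pow _ ?_
    simp only [map_prod, map_sub, aeval_X, aeval_C]
    refine IsUnit.prod_univ_iff.mpr fun i => (isUnit_pow_iff hrep).mp ?_
    rw [hz]
    exact (hz0 i).isUnit.map _
  refine hunit.mul_right_eq_zero.mp ?_
  simp only [map_sum, map_smul, mul_sum, mul_smul_comm, mul_aeval_auxTerm hμ hξ hx hz, smul_sum]
  rw [sum_comm]
  refine sum_eq_zero fun b hb => ?_
  simpa only [map_sum, map_smul, mul_sum, mul_smul_comm, map_zero, mul_zero] using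
    congrArg (fun f => ξ ^ b * aeval x f) (hu b (mem_range.mp hb))

end Vanishing

section Points

variable {F : Type*} [Field F] [Algebra K F] {t z : ι → K} {k μ : ℕ}

lemma sub_pow_card_pow {S : Type*} [CommRing S] [Algebra K S] (a b : S) (n : ℕ) :
    (a - b) ^ q ^ n = a ^ q ^ n - b ^ q ^ n := by
  have h := map_sub ((FiniteField.frobeniusAlgHom K S) ^ n) a b
  simpa only [AlgHom.coe_pow, FiniteField.coe_frobeniusAlgHom, pow_iterate] using h

lemma X_sub_C_pow_dvd_sum_smul_auxTerm [DecidableEq ι] (hμ : μ ≤ k) (hk : k ≠ 0)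
    (hz0 : ∀ i, z i ≠ 0)
    {u : Fin A × Fin D × (ι → Fin (q - 1)) → K}
    (hu : ∀ b < q ^ μ, ∑ v, u v • auxResidue t z μ v b = 0) {x : F} (hx : x ^ q ^ k = x)
    (hz : ∀ i, (x - algebraMap K F (t i)) ^ repunit q k = algebraMap K F (z i)) :
    (X - C x) ^ q ^ μ ∣ (∑ v, u v • auxTerm t k v).map (algebraMap K F) := by
  set S := AdjoinRoot ((X - C x) ^ q ^ μ)
  have hξ : (AdjoinRoot.root ((X - C x) ^ q ^ μ)) ^ q ^ μ = algebraMap F S x ^ q ^ μ := by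
    rw [← sub_eq_zero, ← sub_pow_card_pow]
    rw [AdjoinRoot.algebraMap_eq, ← AdjoinRoot.mk_X, ← AdjoinRoot.mk_C, ← map_sub, ← map_pow]
    exact AdjoinRoot.mk_self
  rw [← AdjoinRoot.mk_eq_zero, ← AdjoinRoot.aeval_eq, aeval_map_algebraMap]
  refine aeval_sum_smul_auxTerm_eq_zero hμ hk hξ (by rw [← map_pow, hx]) (fun i => ?_) hz0 hu
  rw [IsScalarTower.algebraMap_apply K F S, IsScalarTower.algebraMap_apply K F S, ← hz, map_pow,
    map_sub]

lemma card_mul_card_pow_le (ht : Function.Injective t) (hF : ∀ x : F, x ^ q ^ k = x)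
    (hz0 : ∀ i, z i ≠ 0) {T : Finset F}
    (hT : ∀ x ∈ T, ∀ i, (x - algebraMap K F (t i)) ^ repunit q k = algebraMap K F (z i))
    (hμ : μ ≤ k) (A : ℕ) {D : ℕ} (hD : 1 ≤ D)
    (hDk : D * (q + 1 + Fintype.card ι * q) ^ (q - 1) ^ Fintype.card ι < q ^ k)
    (hAD : q ^ μ * (A + D + Fintype.card ι * q ^ μ) < A * D * (q - 1) ^ Fintype.card ι) :
    #T * q ^ μ ≤ q ^ k * (A + Fintype.card ι) := by
  classical
  have hDle : D ≤ q ^ k := (Nat.le_mul_of_pos_right D (by positivity)).trans hDk.le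
  have hk : k ≠ 0 := by
    rintro rfl
    have := Nat.mul_pos hD (pow_pos (Nat.succ_pos (q + Fintype.card ι * q))
      ((q - 1) ^ Fintype.card ι))
    lia
  obtain ⟨u, hu0, hu⟩ := exists_ne_zero_sum_smul_eq_zero (auxResidue (A := A) (D := D) t z μ)
    (natDegree_auxResidue_lt t z μ) (M := q ^ μ) (by simpa [mul_assoc] using hAD)
  have hP : ∑ v, u v • auxTerm t k v ≠ 0 := sum_smul_auxTerm_ne_zero ht hD hDk hu0
  refine (card_mul_le_natDegree ((Polynomial.map_ne_zero_iff (algebraMap K F).injective).mpr hP)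
    fun x hx => X_sub_C_pow_dvd_sum_smul_auxTerm hμ hk hz0 hu (hF x) (hT x hx)).trans ?_
  rw [natDegree_map]
  exact natDegree_sum_le_of_forall_le _ _ fun v _ =>
    (natDegree_smul_le _ _).trans (natDegree_auxTerm_le t hDle v)

end Points

lemma exists_stepanov_parameters {n w : ℕ} (hn : 2 ≤ n) (hw : 0 < w) (m B : ℕ) :
    ∃ c s : ℕ, ∀ k, s ≤ k → ∃ D, 1 ≤ D ∧ D * B < n ^ k ∧
      n ^ (k / 2) * ((n ^ (k / 2) / w + c) + D + m * n ^ (k / 2)) <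
        (n ^ (k / 2) / w + c) * D * w := by
  obtain ⟨s, hs⟩ : ∃ s, B < n ^ s := pow_unbounded_of_one_lt _ hn
  set c := (m + 2) * n ^ s + 2 with hc
  refine ⟨c, s + 2 * c, fun k hk => ⟨n ^ (k - s), Nat.one_le_pow _ _ (by lia), ?_, ?_⟩⟩
  · rw [← Nat.sub_add_cancel (show s ≤ k by lia), pow_add, Nat.add_sub_cancel]
    exact Nat.mul_lt_mul_of_pos_left hs (by positivity)
  set M := n ^ (k / 2)
  set A := M / w + c
  set D := n ^ (k - s)
  have hMM : M * M ≤ n ^ s * D := by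
    rw [← pow_add, ← pow_add]
    exact Nat.pow_le_pow_right (by lia) (by lia)
  have hcM : c ≤ M := (show c ≤ k / 2 by lia).trans (Nat.lt_pow_self hn).le
  have hAM : A ≤ 2 * M := by
    have := Nat.div_le_self M w
    lia
  have hAw : M + (m + 2) * n ^ s < A * w := by
    have := Nat.lt_mul_div_succ M hw
    have : A * w = w * (M / w + 1) + ((m + 2) * n ^ s + 1) * w := by
      simp only [A, hc]
      ring
    have := Nat.le_mul_of_pos_right ((m + 2) * n ^ s + 1) hw
    lia
  calc M * (A + D + m * M) ≤ (m + 2) * (M * M) + M * D := by nlinarith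
    _ ≤ (M + (m + 2) * n ^ s) * D := by nlinarith
    _ < A * w * D := Nat.mul_lt_mul_of_pos_right hAw (by positivity)
    _ = A * D * w := by ring

lemma le_div_add_mul_sqrt {T Q M n w d : ℝ} (hM : 0 < M) (hn : 0 ≤ n) (hd : 0 ≤ d)
    (hMQ : M * M ≤ Q) (hQM : Q ≤ M * M * n) (h : T * M ≤ Q * (M / w + d)) :
    T ≤ Q / w + n * d * √Q := by
  have hsqrt : M ≤ √Q := Real.le_sqrt_of_sq_le (by rwa [sq])
  have hQ : Q / M ≤ n * √Q := by
    rw [div_le_iff₀ hM]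
    nlinarith [mul_nonneg (mul_nonneg hn hM.le) (sub_nonneg.mpr hsqrt)]
  calc T ≤ Q * (M / w + d) / M := by rwa [le_div_iff₀ hM]
    _ = Q / w + Q / M * d := by field_simp
    _ ≤ Q / w + n * √Q * d := by gcongr
    _ = Q / w + n * d * √Q := by ring

lemma card_norm_fiber_mul_le {F : Type*} [Field F] [Fintype F] [Algebra K F] {t z : ι → K}
    (ht : Function.Injective t) (hz0 : ∀ i, z i ≠ 0) {T : Finset F}
    (hT : ∀ x ∈ T, ∀ i, Algebra.norm K (x - algebraMap K F (t i)) = z i) {μ : ℕ}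
    (hμ : μ ≤ Module.finrank K F) (A : ℕ) {D : ℕ} (hD : 1 ≤ D)
    (hDk : D * (q + 1 + Fintype.card ι * q) ^ (q - 1) ^ Fintype.card ι < Fintype.card F)
    (hAD : q ^ μ * (A + D + Fintype.card ι * q ^ μ) < A * D * (q - 1) ^ Fintype.card ι) :
    #T * q ^ μ ≤ Fintype.card F * (A + Fintype.card ι) := by
  have hF : Fintype.card F = q ^ Module.finrank K F := Module.card_eq_pow_finrank
  rw [hF] at hDk ⊢
  refine card_mul_card_pow_le ht (fun x => hF ▸ FiniteField.pow_card x) hz0 (fun x hx i => ?_)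
    hμ A hD hDk hAD
  rw [← hT x hx, FiniteField.algebraMap_norm_eq_pow_sum, Nat.card_eq_fintype_card, repunit]

lemma exists_card_norm_fiber_le_of_le_finrank {t : ι → K} (ht : Function.Injective t) :
    ∃ (B : ℝ) (s : ℕ), 0 ≤ B ∧ ∀ (F : Type*) [Field F] [Fintype F] [Algebra K F] (z : ι → K)
      (_ : ∀ i, z i ≠ 0) (T : Finset F)
      (_ : ∀ x ∈ T, ∀ i, Algebra.norm K (x - algebraMap K F (t i)) = z i),
      s ≤ Module.finrank K F →
      (#T : ℝ) ≤ Fintype.card F / ((q - 1) ^ Fintype.card ι : ℕ) + B * √(Fintype.card F) := by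
  set m := Fintype.card ι
  set w := (q - 1) ^ m
  have hq : 2 ≤ q := Fintype.one_lt_card
  have hw : 0 < w := Nat.pow_pos (by lia)
  obtain ⟨c, s, hparam⟩ := exists_stepanov_parameters hq hw m ((q + 1 + m * q) ^ w)
  refine ⟨q * (c + m : ℕ), s, by positivity, fun F _ _ _ z hz0 T hT hk => ?_⟩
  obtain ⟨D, hD, hDk, hAD⟩ := hparam _ hk
  set k := Module.finrank K F
  have hF : Fintype.card F = q ^ k := Module.card_eq_pow_finrank
  rw [← hF] at hDk
  have hcard := card_norm_fiber_mul_le ht hz0 hT (Nat.div_le_self k 2) _ hD hDk hAD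
  have hsq : q ^ (k / 2) * q ^ (k / 2) ≤ Fintype.card F := by
    rw [hF, ← pow_add]
    exact Nat.pow_le_pow_right (by lia) (by lia)
  have hsq' : Fintype.card F ≤ q ^ (k / 2) * q ^ (k / 2) * q := by
    rw [hF, ← pow_add, ← pow_succ]
    exact Nat.pow_le_pow_right (by lia) (by lia)
  refine le_div_add_mul_sqrt (M := (q ^ (k / 2) : ℕ)) (by positivity) (by positivity)
    (by positivity) (by exact_mod_cast hsq) (by exact_mod_cast hsq') ?_
  have hfloor : ((q ^ (k / 2) / w : ℕ) : ℝ) ≤ (q ^ (k / 2) : ℕ) / (w : ℕ) := Nat.cast_div_le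
  calc (#T : ℝ) * (q ^ (k / 2) : ℕ)
      ≤ Fintype.card F * (((q ^ (k / 2) / w : ℕ) : ℝ) + (c + m : ℕ)) := by
        exact_mod_cast hcard.trans_eq (by rw [add_assoc])
    _ ≤ _ := by gcongr

theorem exists_card_norm_fiber_le {t : ι → K} (ht : Function.Injective t) :
    ∃ B : ℝ, ∀ (F : Type*) [Field F] [Fintype F] [Algebra K F] (z : ι → K)
      (_ : ∀ i, z i ≠ 0) (T : Finset F)
      (_ : ∀ x ∈ T, ∀ i, Algebra.norm K (x - algebraMap K F (t i)) = z i),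
      (#T : ℝ) ≤ Fintype.card F / ((q - 1) ^ Fintype.card ι : ℕ) + B * √(Fintype.card F) := by
  obtain ⟨B, s, hB, hlarge⟩ := exists_card_norm_fiber_le_of_le_finrank ht
  refine ⟨B + √(q ^ s : ℕ), fun F _ _ _ z hz0 T hT => ?_⟩
  rcases le_total s (Module.finrank K F) with hk | hk
  · refine (hlarge F z hz0 T hT hk).trans ?_
    gcongr
    exact le_add_of_nonneg_right (Real.sqrt_nonneg _)
  · have hF : Fintype.card F ≤ q ^ s := by
      rw [Module.card_eq_pow_finrank (K := K) (V := F)]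
      exact Nat.pow_le_pow_right Fintype.card_pos hk
    calc (#T : ℝ) ≤ Fintype.card F := by exact_mod_cast card_le_univ T
      _ = √(Fintype.card F) * √(Fintype.card F) := (Real.mul_self_sqrt (by positivity)).symm
      _ ≤ √(q ^ s : ℕ) * √(Fintype.card F) := by gcongr
      _ ≤ _ := by
        rw [add_mul, ← add_assoc]
        exact le_add_of_nonneg_left (by positivity)

end Stepanov

section CrudeBound

variable {K ι : Type*} [Field K] [Fintype ι]

lemma norm_mulChar_apply_le_one [Finite K] (χ : MulChar K ℂ) (a : K) : ‖χ a‖ ≤ 1 := by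
  rcases eq_or_ne a 0 with rfl | ha
  · rw [MulChar.map_zero, norm_zero]
    exact zero_le_one
  · have hfin : IsOfFinOrder (Units.mk0 a ha) := isOfFinOrder_of_finite _
    exact ((χ : K →* ℂ).isOfFinOrder
      ((Units.coeHom K).isOfFinOrder hfin)).norm_eq_one.le

lemma norm_prod_mulChar_apply_le_one [Finite K] (χ : ι → MulChar K ℂ) (a : ι → K) :
    ‖∏ i, χ i (a i)‖ ≤ 1 := by
  rw [norm_prod]
  exact prod_le_one (fun _ _ => norm_nonneg _) fun i _ => norm_mulChar_apply_le_one _ _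

lemma sum_prod_mulChar_units_eq_zero [Fintype K] [DecidableEq K] [DecidableEq ι]
    {χ : ι → MulChar K ℂ} (hχ : ∃ i, χ i ≠ 1) : ∑ z : ι → Kˣ, ∏ i, χ i (z i) = 0 := by
  obtain ⟨i, hi⟩ := hχ
  rw [← Fintype.prod_sum fun i (z : Kˣ) => χ i z]
  refine prod_eq_zero (mem_univ i) (sum_hom_units_eq_zero
    ((χ i : K →* ℂ).comp (Units.coeHom K)) fun h => hi (MulChar.ext fun a => ?_))
  simpa using DFunLike.congr_fun h a

lemma norm_sum_mul_le_sum_sub {Z : Type*} [Fintype Z] {c : Z → ℂ} {n : Z → ℝ} {b : ℝ}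
    (hsum : ∑ z, c z = 0) (hc : ∀ z, ‖c z‖ ≤ 1) (hn : ∀ z, n z ≤ b) :
    ‖∑ z, (n z : ℂ) * c z‖ ≤ ∑ z, (b - n z) := by
  have hrw : ∑ z, (n z : ℂ) * c z = -∑ z, ((b - n z : ℝ) : ℂ) * c z := by
    simp only [Complex.ofReal_sub, sub_mul, sum_sub_distrib, ← mul_sum, hsum]
    ring
  rw [hrw, norm_neg]
  refine norm_sum_le_of_le _ fun z _ => ?_
  rw [norm_mul, Complex.norm_of_nonneg (sub_nonneg.mpr (hn z))]
  exact mul_le_of_le_one_right (sub_nonneg.mpr (hn z)) (hc z)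

section Fiber

variable [Fintype K] {F : Type*} [Field F] [Fintype F] [Algebra K F] [DecidableEq K]

/-- The elements `x` of the extension `F` for which every `t i - x` has norm `z i`. -/
def normFiber (F : Type*) [Field F] [Fintype F] [Algebra K F] (t : ι → K) (z : ι → Kˣ) : Finset F :=
  {x | ∀ i, Algebra.norm K (algebraMap K F (t i) - x) = z i}

lemma sum_prod_mulChar_norm_eq [DecidableEq ι] (χ : ι → MulChar K ℂ) (t : ι → K) :
    ∑ x : F, ∏ i, χ i (Algebra.norm K (algebraMap K F (t i) - x)) =
      ∑ z : ι → Kˣ, ((#(normFiber F t z) : ℝ) : ℂ) * ∏ i, χ i (z i) := by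
  classical
  have hx (x : F) : ∏ i, χ i (Algebra.norm K (algebraMap K F (t i) - x)) =
      ∑ z : ι → Kˣ with x ∈ normFiber F t z, ∏ i, χ i (z i) := by
    by_cases h : ∀ i, Algebra.norm K (algebraMap K F (t i) - x) ≠ 0
    · have hfilter : ({z | x ∈ normFiber F t z} : Finset (ι → Kˣ)) =
          {fun i => Units.mk0 _ (h i)} := by
        ext z
        simp [normFiber, funext_iff, Units.ext_iff, eq_comm]
      rw [hfilter, sum_singleton]
      rfl
    · push Not at h
      obtain ⟨i, hi⟩ := h
      rw [prod_eq_zero (mem_univ i) (by rw [hi, MulChar.map_zero]),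
        filter_false_of_mem, sum_empty]
      exact fun z _ hz => (z i).ne_zero (hi ▸ ((mem_filter.mp hz).2 i).symm)
  simp only [hx, sum_filter]
  rw [sum_comm]
  refine sum_congr rfl fun z _ => ?_
  rw [← sum_filter, filter_mem_eq_inter, univ_inter, sum_const, nsmul_eq_mul,
    Complex.ofReal_natCast]

lemma card_le_sum_card_normFiber [DecidableEq ι] (t : ι → K) :
    Fintype.card F ≤ ∑ z, #(normFiber F t z) + Fintype.card ι := by
  classical
  have hcover : (univ : Finset F) ⊆
      univ.biUnion (normFiber F t) ∪ univ.image fun i => algebraMap K F (t i) := by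
    intro x _
    by_cases h : ∀ i, Algebra.norm K (algebraMap K F (t i) - x) ≠ 0
    · refine mem_union_left _ (mem_biUnion.mpr ⟨fun i => Units.mk0 _ (h i), mem_univ _, ?_⟩)
      exact mem_filter.mpr ⟨mem_univ _, fun _ => rfl⟩
    · push Not at h
      obtain ⟨i, hi⟩ := h
      refine mem_union_right _ (mem_image.mpr ⟨i, mem_univ _, ?_⟩)
      exact sub_eq_zero.mp (Algebra.norm_eq_zero_iff.mp hi)
  calc Fintype.card F ≤ _ := card_le_card hcover
    _ ≤ _ := (card_union_le _ _).trans (add_le_add card_biUnion_le card_image_le)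

end Fiber

theorem exists_norm_sum_prod_mulChar_norm_le [Finite K] {t : ι → K} (ht : Function.Injective t) :
    ∃ B : ℝ, ∀ (χ : ι → MulChar K ℂ) (_ : ∃ i, χ i ≠ 1) (F : Type*) [Field F] [Fintype F]
      [Algebra K F], ‖∑ x : F, ∏ i, χ i (Algebra.norm K (algebraMap K F (t i) - x))‖ ≤
        B * √(Fintype.card F) := by
  classical
  have := Fintype.ofFinite K
  obtain ⟨B, hfiber⟩ := exists_card_norm_fiber_le ht
  set m := Fintype.card ι
  set w := (Fintype.card K - 1) ^ m
  refine ⟨w * B + m, fun χ hχ F _ _ _ => ?_⟩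
  have hle (z : ι → Kˣ) :
      (#(normFiber F t z) : ℝ) ≤ Fintype.card F / w + B * √(Fintype.card F) := by
    refine hfiber F (fun i => Algebra.norm K (-1 : F) * z i) (fun i => ?_) _ fun x hx i => ?_
    · simp
    · rw [← (mem_filter.mp hx).2 i, ← map_mul, neg_one_mul, neg_sub]
  have hw : (0 : ℝ) < w := by
    exact_mod_cast Nat.pow_pos (Nat.sub_pos_of_lt Fintype.one_lt_card)
  have hcover : (Fintype.card F : ℝ) ≤ ∑ z, (#(normFiber F t z) : ℝ) + m := by
    exact_mod_cast card_le_sum_card_normFiber t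
  have hF : 1 ≤ √(Fintype.card F : ℝ) :=
    Real.one_le_sqrt.mpr (by exact_mod_cast Fintype.card_pos (α := F))
  rw [sum_prod_mulChar_norm_eq]
  refine (norm_sum_mul_le_sum_sub (sum_prod_mulChar_units_eq_zero hχ)
    (fun z => norm_prod_mulChar_apply_le_one χ _) hle).trans ?_
  have hcard : Fintype.card (ι → Kˣ) = w := by
    rw [Fintype.card_fun, Fintype.card_units]
  rw [sum_sub_distrib, sum_const, card_univ, hcard, nsmul_eq_mul, mul_add, mul_div_cancel₀ _ hw.ne']
  have : (m : ℝ) ≤ m * √(Fintype.card F) := le_mul_of_one_le_right (by positivity) hF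
  linarith

end CrudeBound

section MonicsOfDegree

variable {K R : Type*} [Field K] [Finite K] [CommRing R]

lemma finite_setOf_monic_natDegree_eq (K : Type*) [Field K] [Finite K] (d : ℕ) :
    {g : K[X] | g.Monic ∧ g.natDegree = d}.Finite :=
  Finite.of_equiv _ ((monicEquivDegreeLT d).trans (degreeLTEquiv K d).toEquiv).symm

/-- The finite set of monic polynomials of degree `d` over a finite field. -/
def monicsOfDegree (K : Type*) [Field K] [Finite K] (d : ℕ) : Finset K[X] :=
  (finite_setOf_monic_natDegree_eq K d).toFinset

lemma mem_monicsOfDegree {d : ℕ} {g : K[X]} :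
    g ∈ monicsOfDegree K d ↔ g.Monic ∧ g.natDegree = d := by
  simp [monicsOfDegree]

lemma monicsOfDegree_zero : monicsOfDegree K 0 = {1} := by
  ext g
  rw [mem_monicsOfDegree, mem_singleton]
  exact ⟨fun h => h.1.natDegree_eq_zero.mp h.2, by rintro rfl; simp⟩

lemma sum_monicsOfDegree_one {S : Type*} [AddCommMonoid S] [Fintype K] (f : K[X] → S) :
    ∑ g ∈ monicsOfDegree K 1, f g = ∑ x : K, f (X - C x) := by
  refine (sum_bij (fun x _ => X - C x) (fun x _ => ?_) (fun a _ b _ h => ?_) (fun g hg => ?_)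
    fun _ _ => rfl).symm
  · exact mem_monicsOfDegree.mpr ⟨monic_X_sub_C x, natDegree_X_sub_C x⟩
  · simpa using h
  · rw [mem_monicsOfDegree] at hg
    exact ⟨-g.coeff 0, mem_univ _, by rw [hg.1.eq_X_add_C hg.2]; simp⟩

lemma add_mem_monicsOfDegree {d : ℕ} {g h : K[X]} (hg : g ∈ monicsOfDegree K d)
    (hh : h.degree < d) : g + h ∈ monicsOfDegree K d := by
  rw [mem_monicsOfDegree] at hg ⊢
  rw [← hg.2, ← degree_eq_natDegree hg.1.ne_zero] at hh
  exact ⟨hg.1.add_of_left hh, by rw [natDegree_add_eq_left_of_degree_lt hh, hg.2]⟩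

lemma sum_monicsOfDegree_add {S : Type*} [AddCommMonoid S] (f : K[X] → S) {d : ℕ} {h : K[X]}
    (hh : h.degree < d) :
    ∑ g ∈ monicsOfDegree K d, f (g + h) = ∑ g ∈ monicsOfDegree K d, f g :=
  sum_bij' (fun g _ => g + h) (fun g _ => g + -h) (fun _ hg => add_mem_monicsOfDegree hg hh)
    (fun _ hg => add_mem_monicsOfDegree hg (by rwa [degree_neg])) (by simp) (by simp) (by simp)

lemma sum_monicsOfDegree_dvd [DecidableRel ((· ∣ ·) : K[X] → K[X] → Prop)] (f : K[X] →* R)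
    {k l : ℕ} {Q : K[X]} (hQ : Q ∈ monicsOfDegree K k) :
    ∑ g ∈ monicsOfDegree K (k + l) with Q ∣ g, f g = f Q * ∑ h ∈ monicsOfDegree K l, f h := by
  rw [mem_monicsOfDegree] at hQ
  rw [mul_sum]
  refine (sum_bij (fun h _ => Q * h) (fun h hh => ?_) (fun a _ b _ hab => ?_) (fun g hg => ?_)
    fun h _ => (map_mul f Q h).symm).symm
  · rw [mem_monicsOfDegree] at hh
    rw [mem_filter, mem_monicsOfDegree, hQ.1.natDegree_mul hh.1, hQ.2, hh.2]
    exact ⟨⟨hQ.1.mul hh.1, rfl⟩, dvd_mul_right _ _⟩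
  · exact mul_left_cancel₀ hQ.1.ne_zero hab
  · rw [mem_filter, mem_monicsOfDegree] at hg
    obtain ⟨⟨hmonic, hdeg⟩, h, rfl⟩ := hg
    have hh : h.Monic := hQ.1.of_mul_monic_left hmonic
    rw [hQ.1.natDegree_mul hh, hQ.2, Nat.add_left_cancel_iff] at hdeg
    exact ⟨h, mem_monicsOfDegree.mpr ⟨hh, hdeg⟩, rfl⟩

end MonicsOfDegree

section VonMangoldt

open UniqueFactorizationMonoid

variable {K R : Type*} [Field K] [CommRing R]

open scoped Classical in
/-- The polynomial analogue of the von Mangoldt function: its value is `deg P` at the powers `P ^ j`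
with `0 < j` of an irreducible polynomial `P`, and `0` elsewhere. -/
def vonMangoldt (Q : K[X]) : ℕ :=
  if IsPrimePow Q then (radical Q).natDegree else 0

lemma vonMangoldt_one : vonMangoldt (1 : K[X]) = 0 :=
  if_neg not_isPrimePow_one

lemma vonMangoldt_pow {P : K[X]} (hP : Irreducible P) (hm : P.Monic) {j : ℕ} (hj : j ≠ 0) :
    vonMangoldt (P ^ j) = P.natDegree := by
  classical
  rw [vonMangoldt, if_pos (hP.prime.isPrimePow.pow hj), radical_pow_of_prime hP.prime hj,
    hm.normalize_eq_self]

lemma exists_irreducible_monic_pow_eq {Q : K[X]} (hQ : Q.Monic) (h : IsPrimePow Q) :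
    ∃ P : K[X], Irreducible P ∧ P.Monic ∧ ∃ j ≠ 0, P ^ j = Q := by
  classical
  obtain ⟨P, j, hP, hj, rfl⟩ := (isPrimePow_def Q).mp h
  have hm : (normalize P).Monic := monic_normalize hP.ne_zero
  exact ⟨normalize P, (normalize_associated P).symm.irreducible hP.irreducible, hm, j, hj.ne',
    eq_of_monic_of_associated (hm.pow j) hQ ((normalize_associated P).pow_pow)⟩

lemma eq_of_irreducible_monic_pow_eq {P P' : K[X]} (hP : Irreducible P) (hm : P.Monic)
    (hP' : Irreducible P') (hm' : P'.Monic) {j j' : ℕ} (hj : j ≠ 0) (h : P ^ j = P' ^ j') :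
    P = P' := by
  have hdvd : P ∣ P' := hP.prime.dvd_of_dvd_pow (h ▸ dvd_pow_self P hj)
  exact eq_of_monic_of_associated hm hm' (hP.associated_of_dvd hP' hdvd)

open scoped Classical in
lemma irreducible_and_monic_of_mem_normalizedFactors {P g : K[X]} (hP : P ∈ normalizedFactors g) :
    Irreducible P ∧ P.Monic :=
  ⟨irreducible_of_normalized_factor P hP, normalize_normalized_factor P hP ▸
    monic_normalize (irreducible_of_normalized_factor P hP).ne_zero⟩

open scoped Classical in
lemma natDegree_eq_sum_sum_Icc_count {g : K[X]} (hg : g.Monic) :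
    g.natDegree = ∑ P ∈ (normalizedFactors g).toFinset,
      ∑ _j ∈ Icc 1 ((normalizedFactors g).count P), P.natDegree := by
  conv_lhs => rw [← hg.normalize_eq_self, ← prod_normalizedFactors_eq hg.ne_zero,
    natDegree_multiset_prod_of_monic _ fun P hP =>
      (irreducible_and_monic_of_mem_normalizedFactors hP).2, sum_multiset_map_count]
  simp only [sum_const, Nat.card_Icc, Nat.add_sub_cancel]

open scoped Classical in
lemma mem_sigma_Icc_count {g : K[X]} (hg : g ≠ 0) {x : Σ _ : K[X], ℕ} :
    x ∈ (normalizedFactors g).toFinset.sigma (fun P => Icc 1 ((normalizedFactors g).count P)) ↔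
      (Irreducible x.1 ∧ x.1.Monic) ∧ x.2 ≠ 0 ∧ x.1 ^ x.2 ∣ g := by
  obtain ⟨P, j⟩ := x
  have hcount (hP : Irreducible P) (hm : P.Monic) :
      P ^ j ∣ g ↔ j ≤ (normalizedFactors g).count P := by
    rw [pow_dvd_iff_le_emultiplicity, le_emultiplicity_iff_replicate_le_normalizedFactors hP hg,
      hm.normalize_eq_self, Multiset.le_count_iff_replicate_le]
  rw [mem_sigma, Multiset.mem_toFinset, mem_Icc, Nat.one_le_iff_ne_zero]
  constructor
  · rintro ⟨hP, hj, hle⟩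
    obtain ⟨hirr, hm⟩ := irreducible_and_monic_of_mem_normalizedFactors hP
    exact ⟨⟨hirr, hm⟩, hj, (hcount hirr hm).mpr hle⟩
  · rintro ⟨⟨hirr, hm⟩, hj, hdvd⟩
    have hle := (hcount hirr hm).mp hdvd
    exact ⟨Multiset.count_pos.mp ((Nat.pos_of_ne_zero hj).trans_le hle), hj, hle⟩

variable [Finite K]

open scoped Classical in
lemma sum_vonMangoldt_eq {d : ℕ} {g : K[X]} (hg : g ∈ monicsOfDegree K d) :
    ∑ k ∈ range (d + 1), ∑ Q ∈ monicsOfDegree K k with Q ∣ g, vonMangoldt Q = d := by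
  obtain ⟨hm, rfl⟩ := mem_monicsOfDegree.mp hg
  conv_rhs => rw [natDegree_eq_sum_sum_Icc_count hm, sum_sigma']
  rw [sum_sigma']
  refine (sum_of_injOn (fun x => ⟨x.2 * x.1.natDegree, x.1 ^ x.2⟩) ?_ ?_ ?_ ?_).symm
  · rintro ⟨P, j⟩ hx ⟨P', j'⟩ hx' h
    obtain ⟨⟨hP, hPm⟩, hj, -⟩ := (mem_sigma_Icc_count hm.ne_zero).mp hx
    obtain ⟨⟨hP', hPm'⟩, -⟩ := (mem_sigma_Icc_count hm.ne_zero).mp hx'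
    simp only [Sigma.mk.injEq, heq_eq_eq] at h
    obtain rfl := eq_of_irreducible_monic_pow_eq hP hPm hP' hPm' hj h.2
    rw [Nat.eq_of_mul_eq_mul_right hP.natDegree_pos h.1]
  · intro x hx
    obtain ⟨⟨-, hPm⟩, -, hdvd⟩ := (mem_sigma_Icc_count hm.ne_zero).mp hx
    have hdeg := natDegree_pow x.1 x.2
    simp only [coe_sigma, Set.mem_sigma_iff, mem_coe, mem_range, mem_filter, mem_monicsOfDegree]
    exact ⟨Nat.lt_succ_of_le (hdeg ▸ natDegree_le_of_dvd hdvd hm.ne_zero),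
      ⟨hPm.pow x.2, hdeg⟩, hdvd⟩
  · rintro ⟨k, Q⟩ hQ hnot
    simp only [mem_sigma, mem_filter, mem_monicsOfDegree] at hQ
    obtain ⟨-, ⟨hQm, rfl⟩, hdvd⟩ := hQ
    refine if_neg fun hpow => hnot ?_
    obtain ⟨P, hP, hPm, j, hj, rfl⟩ := exists_irreducible_monic_pow_eq hQm hpow
    exact ⟨⟨P, j⟩, (mem_sigma_Icc_count hm.ne_zero).mpr ⟨⟨hP, hPm⟩, hj, hdvd⟩, by simp⟩
  · intro x hx
    obtain ⟨⟨hP, hPm⟩, hj, -⟩ := (mem_sigma_Icc_count hm.ne_zero).mp hx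
    exact (vonMangoldt_pow hP hPm hj).symm

theorem natCast_mul_sum_monicsOfDegree (f : K[X] →* R) (d : ℕ) :
    d * ∑ g ∈ monicsOfDegree K d, f g =
      ∑ kl ∈ antidiagonal d, (∑ Q ∈ monicsOfDegree K kl.1, vonMangoldt Q * f Q) *
        ∑ g ∈ monicsOfDegree K kl.2, f g := by
  classical
  calc d * ∑ g ∈ monicsOfDegree K d, f g
      = ∑ g ∈ monicsOfDegree K d, ∑ k ∈ range (d + 1),
          ∑ Q ∈ monicsOfDegree K k with Q ∣ g, vonMangoldt Q * f g := by
        rw [mul_sum]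
        refine sum_congr rfl fun g hg => ?_
        simp only [← sum_mul]
        exact_mod_cast congrArg (fun n : ℕ => n * f g) (sum_vonMangoldt_eq hg).symm
    _ = ∑ k ∈ range (d + 1), ∑ Q ∈ monicsOfDegree K k,
          ∑ g ∈ monicsOfDegree K d with Q ∣ g, vonMangoldt Q * f g := by
        rw [sum_comm]
        simp only [sum_filter]
        exact sum_congr rfl fun k _ => sum_comm
    _ = ∑ kl ∈ antidiagonal d, ∑ Q ∈ monicsOfDegree K kl.1,
          ∑ g ∈ monicsOfDegree K (kl.1 + kl.2) with Q ∣ g, vonMangoldt Q * f g := by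
        rw [Nat.sum_antidiagonal_eq_sum_range_succ_mk]
        refine sum_congr rfl fun k hk => ?_
        rw [Nat.add_sub_cancel' (mem_range_succ_iff.mp hk)]
    _ = _ := by
        refine sum_congr rfl fun kl _ => ?_
        rw [sum_mul]
        refine sum_congr rfl fun Q hQ => ?_
        rw [← mul_sum, sum_monicsOfDegree_dvd f hQ, mul_assoc]

end VonMangoldt

section FieldCharpoly

open Module

variable {K F : Type*} [Field K] [Field F] [Algebra K F] [FiniteDimensional K F]

/-- The characteristic polynomial of multiplication by `x` on the finite extension `F` of `K`,
written as a power of the minimal polynomial of `x`. -/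
def fieldCharpoly (K : Type*) {F : Type*} [Field K] [Field F] [Algebra K F] (x : F) : K[X] :=
  minpoly K x ^ (finrank K F / (minpoly K x).natDegree)

lemma eval_fieldCharpoly (x : F) (t : K) :
    (fieldCharpoly K x).eval t = Algebra.norm K (algebraMap K F t - x) := by
  have hx : IsIntegral K x := IsIntegral.of_finite K x
  let E := IntermediateField.adjoin K {x}
  let pb := IntermediateField.adjoin.powerBasis hx
  have hgen : minpoly K pb.gen = minpoly K x := by
    rw [IntermediateField.adjoin.powerBasis_gen, IntermediateField.minpoly_gen]
  have hfinrank : finrank K F / (minpoly K x).natDegree = finrank E F := by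
    rw [← finrank_mul_finrank K E F, IntermediateField.adjoin.finrank hx]
    exact Nat.mul_div_cancel_left _ (minpoly.natDegree_pos hx)
  have hnorm : Algebra.norm K (algebraMap K E t - pb.gen) = (minpoly K x).eval t := by
    rw [Algebra.norm_eq_matrix_det pb.basis, ← hgen, ← charpoly_leftMulMatrix,
      Matrix.eval_charpoly, map_sub, AlgHom.commutes]
    rfl
  have hsub : algebraMap K F t - x = algebraMap E F (algebraMap K E t - pb.gen) := by
    simp [pb, E]
  rw [fieldCharpoly, eval_pow, hfinrank, hsub, ← Algebra.norm_norm (S := E),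
    Algebra.norm_algebraMap, map_pow, hnorm]

lemma fieldCharpoly_mem_monicsOfDegree [Finite K] (x : F) :
    fieldCharpoly K x ∈ monicsOfDegree K (finrank K F) := by
  have hx : IsIntegral K x := IsIntegral.of_finite K x
  refine mem_monicsOfDegree.mpr ⟨(minpoly.monic hx).pow _, ?_⟩
  rw [fieldCharpoly, natDegree_pow, Nat.div_mul_cancel (minpoly.degree_dvd hx)]

end FieldCharpoly

section CountConjugates

open Module

variable {K F : Type*} [Field K] [Finite K] [Field F] [Fintype F] [Algebra K F]

lemma card_filter_minpoly_eq [DecidableEq K[X]] {P : K[X]} (hP : Irreducible P) (hm : P.Monic)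
    (hdvd : P.natDegree ∣ finrank K F) : #{x : F | minpoly K x = P} = P.natDegree := by
  have hcard : Fintype.card F = Nat.card K ^ finrank K F := by
    rw [← Nat.card_eq_fintype_card, natCard_eq_pow_finrank (K := K)]
  have hsplits : (P.map (algebraMap K F)).Splits := by
    have hall : ((X ^ Fintype.card F - X : K[X]).map (algebraMap K F)).Splits :=
      (FiniteField.isSplittingField_sub F K).splits'
    refine hall.of_dvd ?_ (Polynomial.map_dvd _ ?_)
    · simpa using FiniteField.X_pow_card_sub_X_ne_zero F Fintype.one_lt_card
    · rw [hcard]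
      exact hP.natDegree_dvd_iff_dvd_X_pow_card_pow_sub_X.mp hdvd
  rw [← card_rootSet_eq_natDegree (PerfectField.separable_of_irreducible hP) hsplits,
    ← Set.toFinset_card]
  congr 1
  ext x
  rw [mem_filter, Set.mem_toFinset, mem_rootSet]
  refine ⟨?_, fun h => ⟨mem_univ _, (minpoly.eq_of_irreducible_of_monic hP h.2 hm).symm⟩⟩
  rintro ⟨-, rfl⟩
  exact ⟨hP.ne_zero, minpoly.aeval _ _⟩

lemma card_filter_fieldCharpoly_eq [DecidableEq K[X]] {Q : K[X]}
    (hQ : Q ∈ monicsOfDegree K (finrank K F)) :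
    #{x : F | fieldCharpoly K x = Q} = vonMangoldt Q := by
  obtain ⟨hQm, hdeg⟩ := mem_monicsOfDegree.mp hQ
  have hint (x : F) : IsIntegral K x := IsIntegral.of_finite K x
  have hexp (x : F) : finrank K F / (minpoly K x).natDegree ≠ 0 :=
    (Nat.div_pos (minpoly.natDegree_le x) (minpoly.natDegree_pos (hint x))).ne'
  by_cases hpow : IsPrimePow Q
  · obtain ⟨P, hP, hPm, j, hj, rfl⟩ := exists_irreducible_monic_pow_eq hQm hpow
    rw [natDegree_pow] at hdeg
    rw [vonMangoldt_pow hP hPm hj, ← card_filter_minpoly_eq (F := F) hP hPm (Dvd.intro_left j hdeg)]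
    congr 1
    refine filter_congr fun x _ => ⟨fun h => ?_, fun h => ?_⟩
    · exact eq_of_irreducible_monic_pow_eq (minpoly.irreducible (hint x)) (minpoly.monic (hint x))
        hP hPm (hexp x) h
    · rw [fieldCharpoly, h, ← hdeg, Nat.mul_div_cancel _ hP.natDegree_pos]
  · rw [vonMangoldt, if_neg hpow, card_eq_zero, filter_eq_empty_iff]
    rintro x - rfl
    exact hpow ((minpoly.irreducible (hint x)).prime.isPrimePow.pow (hexp x))

theorem sum_vonMangoldt_mul_eq_sum_fieldCharpoly {R : Type*} [CommRing R] (f : K[X] → R) :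
    ∑ Q ∈ monicsOfDegree K (finrank K F), vonMangoldt Q * f Q =
      ∑ x : F, f (fieldCharpoly K x) := by
  classical
  rw [← sum_fiberwise_of_maps_to (s := (univ : Finset F)) (g := fieldCharpoly K)
    fun x _ => fieldCharpoly_mem_monicsOfDegree x]
  refine sum_congr rfl fun Q hQ => ?_
  rw [← card_filter_fieldCharpoly_eq hQ, ← nsmul_eq_mul, ← sum_const]
  exact sum_congr rfl fun x hx => by rw [(mem_filter.mp hx).2]

end CountConjugates

section EvalChar

variable {K ι : Type*} [Field K] [Fintype ι]

/-- The Dirichlet character `g ↦ ∏ i, χ i (g (t i))` on polynomials. -/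
def evalChar (χ : ι → MulChar K ℂ) (t : ι → K) : K[X] →* ℂ where
  toFun g := ∏ i, χ i (g.eval (t i))
  map_one' := by simp
  map_mul' g h := by simp [prod_mul_distrib]

variable {χ : ι → MulChar K ℂ} {t : ι → K}

lemma evalChar_apply (g : K[X]) : evalChar χ t g = ∏ i, χ i (g.eval (t i)) :=
  rfl

lemma sum_evalChar_monicsOfDegree_zero [Finite K] :
    ∑ g ∈ monicsOfDegree K 0, evalChar χ t g = 1 := by
  rw [monicsOfDegree_zero, sum_singleton, map_one]

lemma sum_evalChar_monicsOfDegree_one [Fintype K] :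
    ∑ g ∈ monicsOfDegree K 1, evalChar χ t g = ∑ x, ∏ i, χ i (t i - x) := by
  simp [sum_monicsOfDegree_one, evalChar_apply]

lemma sum_prod_mulChar_add_eq_zero [Fintype K] [DecidableEq ι] (hχ : ∃ i, χ i ≠ 1)
    (a : ι → K) : ∑ v : ι → K, ∏ i, χ i (a i + v i) = 0 := by
  obtain ⟨i, hi⟩ := hχ
  rw [← Fintype.prod_sum fun i y => χ i (a i + y)]
  refine prod_eq_zero (mem_univ i) ?_
  exact (Equiv.sum_comp (Equiv.addLeft (a i)) (χ i)).trans (MulChar.sum_eq_zero_of_ne_one hi)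

/-- By Lagrange interpolation the values at `t` of a monic polynomial of large degree are
equidistributed. -/
lemma sum_evalChar_monicsOfDegree_eq_zero [Finite K] (ht : Function.Injective t)
    (hχ : ∃ i, χ i ≠ 1) {d : ℕ} (hd : Fintype.card ι ≤ d) :
    ∑ g ∈ monicsOfDegree K d, evalChar χ t g = 0 := by
  classical
  have := Fintype.ofFinite K
  have hshift (v : ι → K) : ∑ g ∈ monicsOfDegree K d, ∏ i, χ i (g.eval (t i) + v i) =
      ∑ g ∈ monicsOfDegree K d, evalChar χ t g := by
    have hdeg : (Lagrange.interpolate univ t v).degree < d :=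
      (Lagrange.degree_interpolate_lt v ht.injOn).trans_le (by exact_mod_cast hd)
    rw [← sum_monicsOfDegree_add (evalChar χ t) hdeg]
    refine sum_congr rfl fun g _ => ?_
    rw [evalChar_apply]
    simp only [eval_add, Lagrange.eval_interpolate_at_node v ht.injOn (mem_univ _)]
  have hmul : (Fintype.card (ι → K) : ℂ) * ∑ g ∈ monicsOfDegree K d, evalChar χ t g = 0 := by
    rw [← nsmul_eq_mul, ← card_univ, ← sum_const, ← sum_congr rfl fun v _ => hshift v, sum_comm]
    exact sum_eq_zero fun g _ => sum_prod_mulChar_add_eq_zero hχ _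
  exact (mul_eq_zero.mp hmul).resolve_left (by simp)

end EvalChar

section RootBound

open Metric

lemma ne_zero_of_hasDerivAt_mul {f g : ℂ → ℂ} {c z : ℂ} {r : ℝ}
    (hg : DifferentiableOn ℂ g (ball c r)) (hf : ∀ w ∈ ball c r, HasDerivAt f (g w * f w) w)
    (hc : f c ≠ 0) (hz : z ∈ ball c r) : f z ≠ 0 := by
  obtain ⟨G, hG⟩ := hg.isExactOn_ball
  have hderiv (w : ℂ) (hw : w ∈ ball c r) : HasDerivAt (fun w => f w * Complex.exp (-G w)) 0 w := by
    refine ((hf w hw).mul (hG w hw).neg.cexp).congr_deriv ?_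
    simp only [Pi.neg_apply]
    ring
  have hconst : f z * Complex.exp (-G z) = f c * Complex.exp (-G c) :=
    (convex_ball c r).is_const_of_fderivWithin_eq_zero
      (fun w hw => (hderiv w hw).differentiableAt.differentiableWithinAt)
      (fun w hw => by
        rw [(hderiv w hw).hasFDerivAt.hasFDerivWithinAt.fderivWithin
          (isOpen_ball.uniqueDiffWithinAt hw)]
        ext
        simp)
      hz (mem_ball_self (pos_of_mem_ball hz))
  intro h
  rw [h, zero_mul] at hconst
  exact mul_ne_zero hc (Complex.exp_ne_zero _) hconst.symm

variable {L : ℂ[X]} {S : ℕ → ℂ} {B ρ r : ℝ} {z : ℂ}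

lemma norm_mul_pow_le (hS : ∀ k, ‖S k‖ ≤ B * ρ ^ k) (hz : ‖z‖ ≤ r) (k : ℕ) :
    ‖S k * z ^ k‖ ≤ B * (ρ * r) ^ k := by
  rw [norm_mul, norm_pow, mul_pow, ← mul_assoc]
  have hSk := (norm_nonneg _).trans (hS k)
  gcongr
  exact hS k

lemma summable_mul_pow (hρ : 0 ≤ ρ) (hr : 0 ≤ r) (hρr : ρ * r < 1) :
    Summable fun k : ℕ => B * (ρ * r) ^ k :=
  (summable_geometric_of_lt_one (mul_nonneg hρ hr) hρr).mul_left B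

lemma differentiableOn_tsum_mul_pow (hρ : 0 ≤ ρ) (hS : ∀ k, ‖S k‖ ≤ B * ρ ^ k) (hr : 0 ≤ r)
    (hρr : ρ * r < 1) : DifferentiableOn ℂ (fun z => ∑' k, S k * z ^ k) (ball 0 r) :=
  Complex.differentiableOn_tsum_of_summable_norm (summable_mul_pow hρ hr hρr)
    (fun k => by fun_prop) isOpen_ball
    fun k _ hw => norm_mul_pow_le hS (mem_ball_zero_iff.mp hw).le k

lemma eval_derivative_eq_tsum_mul_eval
    (hL : ∀ d : ℕ, (d + 1) * L.coeff (d + 1) = ∑ kl ∈ antidiagonal d, S kl.1 * L.coeff kl.2)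
    (hS : Summable fun k => ‖S k * z ^ k‖) :
    L.derivative.eval z = (∑' k, S k * z ^ k) * L.eval z := by
  have hevalTsum (P : ℂ[X]) : HasSum (fun d => P.coeff d * z ^ d) (P.eval z) := by
    rw [eval_eq_sum_range]
    exact hasSum_sum_of_ne_finset_zero fun d hd => by
      rw [coeff_eq_zero_of_natDegree_lt (by simpa [Nat.lt_succ_iff] using hd), zero_mul]
  have hsummable : Summable fun d => ‖L.coeff d * z ^ d‖ := (hevalTsum L).summable.norm
  rw [← (hevalTsum L).tsum_eq, ← (hevalTsum _).tsum_eq,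
    tsum_mul_tsum_eq_tsum_sum_antidiagonal_of_summable_norm hS hsummable]
  refine tsum_congr fun d => ?_
  rw [coeff_derivative, mul_comm (L.coeff _), hL, sum_mul]
  refine sum_congr rfl fun kl hkl => ?_
  rw [← mem_antidiagonal.mp hkl, pow_add]
  ring

lemma one_le_mul_norm_of_eval_eq_zero (hρ : 0 < ρ) (hS : ∀ k, ‖S k‖ ≤ B * ρ ^ k)
    (hL : ∀ d : ℕ, (d + 1) * L.coeff (d + 1) = ∑ kl ∈ antidiagonal d, S kl.1 * L.coeff kl.2)
    (h0 : L.eval 0 ≠ 0) (hz : L.eval z = 0) : 1 ≤ ρ * ‖z‖ := by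
  by_contra! hlt
  obtain ⟨r, hzr, hr⟩ := exists_between ((lt_div_iff₀' hρ).mpr hlt)
  have hr0 : 0 ≤ r := (norm_nonneg z).trans hzr.le
  have hρr : ρ * r < 1 := (lt_div_iff₀' hρ).mp hr
  refine ne_zero_of_hasDerivAt_mul (differentiableOn_tsum_mul_pow hρ.le hS hr0 hρr)
    (f := (L.eval ·)) (fun w hw => ?_) h0 (mem_ball_zero_iff.mpr hzr) hz
  rw [← eval_derivative_eq_tsum_mul_eval hL]
  · exact L.hasDerivAt w
  · exact (summable_mul_pow hρ.le hr0 hρr).of_nonneg_of_le (fun _ => norm_nonneg _)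
      (norm_mul_pow_le hS (mem_ball_zero_iff.mp hw).le)

lemma norm_coeff_one_le_natDegree_mul (hρ : 0 < ρ) (h0 : L.coeff 0 = 1)
    (hroots : ∀ z, L.eval z = 0 → 1 ≤ ρ * ‖z‖) : ‖L.coeff 1‖ ≤ L.natDegree * ρ := by
  have heval : L.eval 0 = 1 := by rw [← coeff_zero_eq_eval_zero, h0]
  have hderiv : L.derivative.eval 0 = L.coeff 1 := by
    simp [← coeff_zero_eq_eval_zero, coeff_derivative]
  have hcoeff : L.coeff 1 = (L.roots.map fun z => 1 / (0 - z)).sum := by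
    have := (IsAlgClosed.splits L).eval_derivative_div_eval_of_ne_zero (x := 0) (by simp [heval])
    rwa [heval, hderiv, div_one] at this
  have hterm (z : ℂ) (hz : z ∈ L.roots) : ‖1 / (0 - z)‖ ≤ ρ := by
    have hz1 := hroots z (isRoot_of_mem_roots hz)
    have hpos : 0 < ‖z‖ := pos_of_mul_pos_right (one_pos.trans_le hz1) hρ.le
    simpa [inv_le_iff_one_le_mul₀ hpos] using hz1
  calc ‖L.coeff 1‖ ≤ ((L.roots.map fun z => 1 / (0 - z)).map norm).sum := by
        rw [hcoeff]
        exact norm_multiset_sum_le _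
    _ ≤ Multiset.card L.roots * ρ := by
        have := Multiset.sum_le_card_nsmul ((L.roots.map fun z => 1 / (0 - z)).map norm) ρ
          (by simpa [@forall_comm ℝ] using hterm)
        simpa using this
    _ ≤ L.natDegree * ρ := by
        gcongr
        exact card_roots' L

end RootBound

section Weil

variable {K ι : Type*} [Field K] [Fintype K] [Fintype ι]

/-- The `L`-function of the character `evalChar χ t`: a formal series which is a polynomial of
degree less than `Fintype.card ι` when `t` is injective and `χ` is nontrivial, and is therefore
truncated there. -/
def lFunction (χ : ι → MulChar K ℂ) (t : ι → K) : ℂ[X] :=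
  ∑ d ∈ range (Fintype.card ι), C (∑ g ∈ monicsOfDegree K d, evalChar χ t g) * X ^ d

variable {χ : ι → MulChar K ℂ} {t : ι → K}

lemma coeff_lFunction (ht : Function.Injective t) (hχ : ∃ i, χ i ≠ 1) (d : ℕ) :
    (lFunction χ t).coeff d = ∑ g ∈ monicsOfDegree K d, evalChar χ t g := by
  simp only [lFunction, finsetSum_coeff, coeff_C_mul_X_pow, sum_ite_eq, mem_range]
  split_ifs with hd
  · rfl
  · exact (sum_evalChar_monicsOfDegree_eq_zero ht hχ (not_lt.mp hd)).symm

lemma natDegree_lFunction_le (χ : ι → MulChar K ℂ) (t : ι → K) :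
    (lFunction χ t).natDegree ≤ Fintype.card ι - 1 :=
  natDegree_sum_le_of_forall_le _ _ fun _ hd =>
    (natDegree_C_mul_X_pow_le _ _).trans (Nat.le_sub_one_of_lt (mem_range.mp hd))

/-- Newton's identity says that the logarithmic derivative of the `L`-function is the generating
series of the sums of `vonMangoldt Q * evalChar χ t Q`. -/
lemma succ_mul_coeff_lFunction_succ (ht : Function.Injective t) (hχ : ∃ i, χ i ≠ 1) (d : ℕ) :
    (d + 1) * (lFunction χ t).coeff (d + 1) = ∑ kl ∈ antidiagonal d,
      (∑ Q ∈ monicsOfDegree K (kl.1 + 1), vonMangoldt Q * evalChar χ t Q) *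
        (lFunction χ t).coeff kl.2 := by
  have hNewton := natCast_mul_sum_monicsOfDegree (evalChar χ t) (d + 1)
  rw [Nat.sum_antidiagonal_succ, monicsOfDegree_zero, sum_singleton, vonMangoldt_one,
    Nat.cast_zero, zero_mul, zero_mul, zero_add] at hNewton
  simpa only [coeff_lFunction ht hχ, Nat.cast_add, Nat.cast_one] using hNewton

lemma exists_norm_sum_vonMangoldt_mul_evalChar_le (ht : Function.Injective t)
    (hχ : ∃ i, χ i ≠ 1) :
    ∃ B : ℝ, ∀ k : ℕ, ‖∑ Q ∈ monicsOfDegree K (k + 1), vonMangoldt Q * evalChar χ t Q‖ ≤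
      B * √(Fintype.card K) ^ k := by
  obtain ⟨B, hB⟩ := exists_norm_sum_prod_mulChar_norm_le ht
  obtain ⟨p, _⟩ := CharP.exists K
  have : Fact p.Prime := ⟨CharP.char_is_prime K p⟩
  refine ⟨B * √(Fintype.card K), fun k => ?_⟩
  let F := FiniteField.Extension K p (k + 1)
  have := Fintype.ofFinite F
  have hcard : Fintype.card F = Fintype.card K ^ (k + 1) := by
    rw [Fintype.card_eq_nat_card, FiniteField.natCard_extension, Nat.card_eq_fintype_card]
  have hsum := sum_vonMangoldt_mul_eq_sum_fieldCharpoly (F := F) (evalChar χ t)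
  rw [FiniteField.finrank_extension] at hsum
  have hsqrt : √(Fintype.card F) = √(Fintype.card K) ^ (k + 1) := by
    rw [hcard, Nat.cast_pow, Real.sqrt_eq_iff_mul_self_eq (by positivity) (by positivity),
      ← mul_pow, Real.mul_self_sqrt (by positivity)]
  simp_rw [hsum, evalChar_apply, eval_fieldCharpoly]
  rw [mul_assoc, ← pow_succ', ← hsqrt]
  exact hB χ hχ F

theorem norm_sum_prod_mulChar_sub_le (ht : Function.Injective t) (hχ : ∃ i, χ i ≠ 1) :
    ‖∑ x, ∏ i, χ i (t i - x)‖ ≤ (Fintype.card ι - 1) * √(Fintype.card K) := by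
  obtain ⟨B, hB⟩ := exists_norm_sum_vonMangoldt_mul_evalChar_le ht hχ
  have hι : 1 ≤ Fintype.card ι := Fintype.card_pos_iff.mpr hχ.nonempty
  have hρ : 0 < √(Fintype.card K) := Real.sqrt_pos.mpr (by exact_mod_cast Fintype.card_pos)
  have h0 : (lFunction χ t).coeff 0 = 1 := by
    rw [coeff_lFunction ht hχ, sum_evalChar_monicsOfDegree_zero]
  have hroots (z : ℂ) (hz : (lFunction χ t).eval z = 0) : 1 ≤ √(Fintype.card K) * ‖z‖ :=
    one_le_mul_norm_of_eval_eq_zero hρ hB (succ_mul_coeff_lFunction_succ ht hχ)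
      (by rw [← coeff_zero_eq_eval_zero, h0]; exact one_ne_zero) hz
  rw [← sum_evalChar_monicsOfDegree_one, ← coeff_lFunction ht hχ]
  refine (norm_coeff_one_le_natDegree_mul hρ h0 hroots).trans ?_
  rw [← Nat.cast_one, ← Nat.cast_sub hι]
  gcongr
  exact natDegree_lFunction_le χ t

end Weil

section Annihilator

variable {M : Type*} [CommRing M] [Finite M]

/-- The group of characters that are trivial on the subgroup `G` of the unit group. -/
def annihilator (G : Subgroup Mˣ) : Subgroup (MulChar M ℂ) :=
  (MulChar.subgroupOrderIsoSubgroupMulChar M ℂ G).ofDual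

variable {G : Subgroup Mˣ}

lemma card_annihilator [Fintype (annihilator G)] : Fintype.card (annihilator G) = G.index := by
  rw [Fintype.card_eq_nat_card]
  exact MulChar.card_subgroupOrderIsoSubgroupMulChar

lemma apply_eq_one_of_mem_annihilator {χ : MulChar M ℂ} (hχ : χ ∈ annihilator G) {u : Mˣ}
    (hu : u ∈ G) : χ u = 1 :=
  MulChar.mem_subgroupOrderIsoSubgroupMulChar_iff.mp hχ u hu

lemma exists_mem_annihilator_apply_ne_one {u : Mˣ} (hu : u ∉ G) :
    ∃ χ ∈ annihilator G, χ u ≠ 1 := by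
  have h := MulChar.mem_subgroupOrderIsoSubgroupMulChar_symm_iff (X := annihilator G) (m := u)
  rw [annihilator, OrderDual.toDual_ofDual, OrderIso.symm_apply_apply] at h
  by_contra! hall
  exact hu (h.mpr hall)

lemma sum_annihilator_apply [Fintype (annihilator G)] (a : M)
    [Decidable (a ∈ Units.val '' (G : Set Mˣ))] :
    ∑ χ : annihilator G, (χ : MulChar M ℂ) a =
      if a ∈ Units.val '' (G : Set Mˣ) then (G.index : ℂ) else 0 := by
  split_ifs with ha
  · obtain ⟨u, hu, rfl⟩ := ha
    rw [sum_congr rfl fun χ _ => apply_eq_one_of_mem_annihilator χ.2 hu, sum_const, nsmul_one,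
      card_univ, card_annihilator]
  by_cases hunit : IsUnit a
  · obtain ⟨u, rfl⟩ := hunit
    obtain ⟨ψ, hψ, hne⟩ := exists_mem_annihilator_apply_ne_one fun hu => ha ⟨u, hu, rfl⟩
    have hmul : ψ u * ∑ χ : annihilator G, (χ : MulChar M ℂ) u =
        ∑ χ : annihilator G, (χ : MulChar M ℂ) u := by
      rw [mul_sum]
      exact Equiv.sum_comp (Equiv.mulLeft (⟨ψ, hψ⟩ : annihilator G))
        fun χ => (χ : MulChar M ℂ) u
    exact (mul_left_eq_self₀.mp hmul).resolve_left hne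
  · exact sum_eq_zero fun χ _ => MulChar.map_nonunit _ hunit

end Annihilator

section Dilations

variable {K ι : Type*} [Field K] {G : Subgroup Kˣ} {c : ι → K}

/-- The set of `x` for which all `1 + c i * x` lie in the multiplicative group `G`. -/
def dilationSet (G : Subgroup Kˣ) (c : ι → K) : Set K :=
  {x | ∀ i, 1 + c i * x ∈ Units.val '' (G : Set Kˣ)}

lemma zero_mem_dilationSet : 0 ∈ dilationSet G c := fun _ => ⟨1, G.one_mem, by simp⟩

variable [Fintype K] [Fintype ι]

lemma norm_sum_prod_mulChar_one_add_mul_le (hc : Function.Injective c) (hc0 : ∀ i, c i ≠ 0)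
    {χ : ι → MulChar K ℂ} (hχ : ∃ i, χ i ≠ 1) :
    ‖∑ x, ∏ i, χ i (1 + c i * x)‖ ≤ (Fintype.card ι - 1) * √(Fintype.card K) := by
  have ht : Function.Injective fun i => -(c i)⁻¹ :=
    neg_injective.comp (inv_injective.comp hc)
  have hshift (x : K) : ∏ i, χ i (1 + c i * x) =
      (∏ i, χ i (-c i)) * ∏ i, χ i (-(c i)⁻¹ - x) := by
    rw [← prod_mul_distrib]
    refine prod_congr rfl fun i _ => ?_
    rw [← map_mul, mul_sub, neg_mul_neg, mul_inv_cancel₀ (hc0 i), neg_mul, sub_neg_eq_add]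
  rw [sum_congr rfl fun x _ => hshift x, ← mul_sum, norm_mul]
  exact (mul_le_of_le_one_left (norm_nonneg _) (norm_prod_mulChar_apply_le_one χ _)).trans
    (norm_sum_prod_mulChar_sub_le ht hχ)

lemma card_le_card_filter_one_add_mul_ne_zero_add [DecidableEq K] (c : ι → K) :
    Fintype.card K ≤ #{x | ∀ i, 1 + c i * x ≠ 0} + Fintype.card ι := by
  have hcover : (univ : Finset K) ⊆
      ({x | ∀ i, 1 + c i * x ≠ 0} : Finset K) ∪ univ.image fun i => -(c i)⁻¹ := by
    intro x _
    by_contra! hx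
    simp only [mem_union, mem_filter, mem_univ, true_and, mem_image, not_or, not_forall,
      not_not, not_exists] at hx
    obtain ⟨⟨i, hi⟩, himage⟩ := hx
    refine himage i ?_
    rw [inv_eq_of_mul_eq_one_right (b := -x) (by linear_combination -hi), neg_neg]
  calc Fintype.card K ≤ _ := (card_le_card hcover).trans (card_union_le _ _)
    _ ≤ _ := by gcongr; exact card_image_le

lemma sum_prod_one_one_add_mul [DecidableEq K] (c : ι → K) :
    ∑ x, ∏ i, (1 : MulChar K ℂ) (1 + c i * x) = #{x | ∀ i, 1 + c i * x ≠ 0} := by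
  have hone (a : K) : (1 : MulChar K ℂ) a = if a ≠ 0 then 1 else 0 := by
    split_ifs with ha
    · exact MulChar.one_apply (isUnit_iff_ne_zero.mpr ha)
    · rw [not_not.mp ha, MulChar.map_zero]
  simp only [hone, prod_ite_zero, prod_const_one, mem_univ, true_imp_iff, sum_boole]

lemma index_pow_mul_ncard_dilationSet [Fintype (annihilator G)] [DecidableEq ι] :
    (G.index : ℂ) ^ Fintype.card ι * (dilationSet G c).ncard =
      ∑ χ : ι → annihilator G, ∑ x, ∏ i, (χ i : MulChar K ℂ) (1 + c i * x) := by
  classical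
  have hterm (x : K) : ∑ χ : ι → annihilator G, ∏ i, (χ i : MulChar K ℂ) (1 + c i * x) =
      if x ∈ dilationSet G c then (G.index : ℂ) ^ Fintype.card ι else 0 := by
    rw [← Fintype.prod_sum fun i (ψ : annihilator G) => (ψ : MulChar K ℂ) (1 + c i * x)]
    simp only [sum_annihilator_apply, prod_ite_zero, prod_const, card_univ, mem_univ,
      true_imp_iff]
    exact if_congr Iff.rfl rfl rfl
  rw [sum_comm, sum_congr rfl fun x _ => hterm x, ← sum_filter,
    Set.filter_mem_univ_eq_toFinset, sum_const, nsmul_eq_mul, mul_comm,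
    Set.ncard_eq_toFinset_card']

lemma norm_sum_erase_one_le [Fintype (annihilator G)] [DecidableEq ι]
    [DecidableEq (ι → annihilator G)]
    (hc : Function.Injective c) (hc0 : ∀ i, c i ≠ 0) :
    ‖∑ χ ∈ univ.erase (1 : ι → annihilator G),
        ∑ x, ∏ i, (χ i : MulChar K ℂ) (1 + c i * x)‖ ≤
      ((G.index : ℝ) ^ Fintype.card ι - 1) *
        ((Fintype.card ι - 1) * √(Fintype.card K)) := by
  classical
  have hcard : (#(univ.erase (1 : ι → annihilator G)) : ℝ) =
      (G.index : ℝ) ^ Fintype.card ι - 1 := by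
    rw [card_erase_of_mem (mem_univ _), card_univ,
      Nat.cast_sub (Nat.one_le_iff_ne_zero.mpr Fintype.card_ne_zero), Fintype.card_fun,
      card_annihilator, Nat.cast_pow, Nat.cast_one]
  rw [← hcard, ← nsmul_eq_mul]
  refine (norm_sum_le _ _).trans (sum_le_card_nsmul _ _ _ fun χ hχ => ?_)
  refine norm_sum_prod_mulChar_one_add_mul_le hc hc0 ?_
  by_contra! hone
  exact ne_of_mem_erase hχ (funext fun i => Subtype.ext (hone i))

theorem card_sub_le_index_pow_mul_ncard_dilationSet (hc : Function.Injective c)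
    (hc0 : ∀ i, c i ≠ 0) :
    (Fintype.card K : ℝ) - Fintype.card ι - ((G.index : ℝ) ^ Fintype.card ι - 1) *
        ((Fintype.card ι - 1) * √(Fintype.card K)) ≤
      (G.index : ℝ) ^ Fintype.card ι * (dilationSet G c).ncard := by
  classical
  have := Fintype.ofFinite (annihilator G)
  have hsum := index_pow_mul_ncard_dilationSet (G := G) (c := c)
  rw [← add_sum_erase univ _ (mem_univ 1)] at hsum
  simp only [Pi.one_apply, OneMemClass.coe_one, sum_prod_one_one_add_mul] at hsum
  have herror := norm_sum_erase_one_le (G := G) hc hc0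
  rw [← sub_eq_iff_eq_add'.mpr hsum] at herror
  have hnonzero : (Fintype.card K : ℝ) ≤ #{x | ∀ i, 1 + c i * x ≠ 0} + Fintype.card ι :=
    mod_cast card_le_card_filter_one_add_mul_ne_zero_add c
  have hcast : (G.index : ℂ) ^ Fintype.card ι * (dilationSet G c).ncard -
        #{x | ∀ i, 1 + c i * x ≠ 0} =
      ((G.index ^ Fintype.card ι * (dilationSet G c).ncard -
        #{x | ∀ i, 1 + c i * x ≠ 0} : ℝ) : ℂ) := by
    push_cast
    rfl
  rw [hcast, Complex.norm_real] at herror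
  linarith [neg_le_of_abs_le herror]

end Dilations

section Progressions

/-- The non-trivial `(r + 1)`-term arithmetic progressions in the multiplicative group `G`, encoded
by their first term and their difference. -/
abbrev Progression {K : Type*} [Field K] (G : Subgroup Kˣ) (r : ℕ) : Type _ :=
  {ab : K × K // ab.2 ≠ 0 ∧ ∀ i : ℕ, i ≤ r → ab.1 + (i : K) * ab.2 ∈ Units.val '' (G : Set Kˣ)}

variable {K : Type*} [Field K] {r : ℕ}

lemma add_natCast_mul_mem_of_mem_dilationSet {G : Subgroup Kˣ} (a : G) {x : K}
    (hx : x ∈ dilationSet G fun i : Fin r => ((i + 1 : ℕ) : K)) {i : ℕ} (hi : i ≤ r) :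
    ((a : Kˣ) : K) + i * ((a : Kˣ) * x) ∈ Units.val '' (G : Set Kˣ) := by
  rcases i with _ | i
  · exact ⟨a, a.2, by simp⟩
  · obtain ⟨v, hv, hvx⟩ := hx ⟨i, hi⟩
    exact ⟨a * v, G.mul_mem a.2 hv, by rw [Units.val_mul, hvx]; ring⟩

variable [Finite K]

lemma card_mul_ncard_dilationSet_sub_one_le (G : Subgroup Kˣ) (r : ℕ) :
    Nat.card G * ((dilationSet G fun i : Fin r => ((i + 1 : ℕ) : K)).ncard - 1) ≤
      Nat.card (Progression G r) := by
  set S := dilationSet G fun i : Fin r => ((i + 1 : ℕ) : K)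
  let toProgression (u : G × (S \ {0} : Set K)) : Progression G r :=
    ⟨(((u.1 : Kˣ) : K), (u.1 : Kˣ) * (u.2 : K)), mul_ne_zero (Units.ne_zero _) u.2.2.2,
      fun _ hi => add_natCast_mul_mem_of_mem_dilationSet u.1 u.2.2.1 hi⟩
  have hinj : Function.Injective toProgression := by
    rintro ⟨a, x⟩ ⟨a', x'⟩ h
    obtain ⟨hfst, hsnd⟩ := Prod.mk.inj (Subtype.mk.inj h)
    obtain rfl : a = a' := Subtype.ext (Units.ext hfst)
    exact congrArg (a, ·) (Subtype.ext (mul_left_cancel₀ (Units.ne_zero _) hsnd))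
  rw [← Set.ncard_sdiff_singleton_of_mem (zero_mem_dilationSet : (0 : K) ∈ S),
    ← Nat.card_coe_set_eq, ← Nat.card_prod]
  exact Nat.card_le_card_of_injective toProgression hinj

lemma card_sub_le_index_pow_mul_ncard_dilationSet_natCast (p : ℕ) [CharP K p] (hrp : r < p)
    (G : Subgroup Kˣ) :
    (Nat.card K : ℝ) - r - ((G.index : ℝ) ^ r - 1) * ((r - 1) * √(Nat.card K)) ≤
      (G.index : ℝ) ^ r * (dilationSet G fun i : Fin r => ((i + 1 : ℕ) : K)).ncard := by
  have := Fintype.ofFinite K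
  have hmem (i : Fin r) : (i + 1 : ℕ) ∈ Set.Iio p := by
    simp only [Set.mem_Iio]; lia
  have hinj : Function.Injective fun i : Fin r => ((i + 1 : ℕ) : K) := fun i j hij =>
    Fin.ext (Nat.succ_injective (CharP.natCast_injOn_Iio K p (hmem i) (hmem j) hij))
  have hne (i : Fin r) : ((i + 1 : ℕ) : K) ≠ 0 := by
    rw [Ne, CharP.cast_eq_zero_iff K p]
    exact Nat.not_dvd_of_pos_of_lt i.val.succ_pos (hmem i)
  simpa only [Fintype.card_fin, Nat.card_eq_fintype_card] using
    card_sub_le_index_pow_mul_ncard_dilationSet (G := G) hinj hne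

lemma card_mul_index_le (G : Subgroup Kˣ) : Nat.card G * G.index ≤ Nat.card K := by
  rw [Subgroup.card_mul_index]
  exact Nat.card_le_card_of_injective _ Units.val_injective

end Progressions

section Estimates

variable {q g n C : ℝ} {r : ℕ}

lemma mul_pow_lt_sqrt (hr : r ≠ 0) (hq : 0 < q) (hn : 0 < n) (hgn : g * n ≤ q) (hC : 1 ≤ C)
    (hg : C * q ^ ((1 : ℝ) - 1 / (2 * (r : ℝ))) < g) : C * n ^ r < √q := by
  have hg0 : 0 < g := hg.trans' (mul_pos (zero_lt_one.trans_le hC) (by positivity))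
  set P := (q ^ ((1 : ℝ) - 1 / (2 * (r : ℝ)))) ^ r with hP
  have hP0 : 0 < P := by positivity
  have hPsqrt : P * √q = q ^ r := by
    rw [hP, Real.sqrt_eq_rpow, ← Real.rpow_natCast, ← Real.rpow_mul hq.le, ← Real.rpow_add hq,
      ← Real.rpow_natCast]
    congr 1
    field_simp
    ring
  have hCr : C ≤ C ^ r := le_self_pow₀ hC hr
  refine lt_of_mul_lt_mul_left ?_ hP0.le
  calc P * (C * n ^ r) ≤ P * (C ^ r * n ^ r) := by gcongr
    _ = (C * q ^ ((1 : ℝ) - 1 / (2 * (r : ℝ)))) ^ r * n ^ r := by rw [mul_pow, hP]; ring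
    _ < g ^ r * n ^ r := by gcongr
    _ = (g * n) ^ r := (mul_pow _ _ _).symm
    _ ≤ q ^ r := by gcongr
    _ = P * √q := hPsqrt.symm

lemma half_div_pow_mul_le_sub_one {N : ℝ} (hr : r ≠ 0) (hg : 0 ≤ g) (hn : 1 ≤ n)
    (hgn : g * n ≤ q) (hsmall : 4 * r * n ^ r < √q)
    (hN : q - r - (n ^ r - 1) * ((r - 1) * √q) ≤ n ^ r * N) :
    1 / 2 * (g / q) ^ r * q ≤ N - 1 := by
  have hq : 0 < q := Real.sqrt_pos.mp (hsmall.trans_le' (by positivity))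
  set s := √q
  have hss : s * s = q := Real.mul_self_sqrt hq.le
  have hr1 : (1 : ℝ) ≤ r := mod_cast Nat.one_le_iff_ne_zero.mpr hr
  have hw : 1 ≤ n ^ r := one_le_pow₀ hn
  have hrw : 1 ≤ r * n ^ r := one_le_mul_of_one_le_of_one_le hr1 hw
  have herror : r + n ^ r + (n ^ r - 1) * ((r - 1) * s) ≤ q / 4 := by
    have : r + n ^ r ≤ (r + n ^ r - 1) * s := by nlinarith
    nlinarith
  have hhalf : q / 2 ≤ (N - 1) * n ^ r := by linarith
  have hratio : (g / q) ^ r * n ^ r ≤ 1 := by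
    rw [← mul_pow, div_mul_eq_mul_div]
    exact pow_le_one₀ (by positivity) ((div_le_one hq).mpr hgn)
  refine le_of_mul_le_mul_right ?_ (zero_lt_one.trans_le hw)
  calc 1 / 2 * (g / q) ^ r * q * n ^ r = q / 2 * ((g / q) ^ r * n ^ r) := by ring
    _ ≤ q / 2 := mul_le_of_le_one_right (by positivity) hratio
    _ ≤ (N - 1) * n ^ r := hhalf

end Estimates

end

end CharacterSum

open CharacterSum in
theorem count_progressions_in_multiplicative_groups_general {K : Type*} [Field K]
    [Finite K] (p : ℕ) [CharP K p] {r : ℕ} (hr : r ≠ 0) (hrp : r < p) (G : Subgroup Kˣ)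
    (hG : 4 * r * (Nat.card K : ℝ) ^ ((1 : ℝ) - 1 / (2 * (r : ℝ))) < Nat.card G) :
    1 / 2 * ((Nat.card G : ℝ) / Nat.card K) ^ r * Nat.card K * Nat.card G ≤
      Nat.card (Progression G r) := by
  have hq : (0 : ℝ) < Nat.card K := mod_cast Nat.card_pos
  have hn : (1 : ℝ) ≤ G.index := mod_cast Nat.one_le_iff_ne_zero.mpr G.index_ne_zero_of_finite
  have hgn : (Nat.card G : ℝ) * G.index ≤ Nat.card K := mod_cast card_mul_index_le G
  have hC : (1 : ℝ) ≤ 4 * r := mod_cast (by lia : 1 ≤ 4 * r)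
  have hindex : 4 * r * (G.index : ℝ) ^ r < √(Nat.card K) :=
    mul_pow_lt_sqrt hr hq (by linarith) hgn hC hG
  have hdilations := half_div_pow_mul_le_sub_one hr (Nat.cast_nonneg _) hn hgn hindex
    (card_sub_le_index_pow_mul_ncard_dilationSet_natCast p hrp G)
  rw [mul_comm]
  refine (mul_le_mul_of_nonneg_left hdilations (Nat.cast_nonneg _)).trans ?_
  refine le_trans ?_ (Nat.cast_le.mpr (card_mul_ncard_dilationSet_sub_one_le G r))
  rw [Nat.cast_mul]
  gcongr
  exact sub_le_iff_le_add.mpr (mod_cast le_tsub_add)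

/-- Proposition 2: For fixed `r ∈ ℤ⁺` there are constants `c_r, C_r > 0` such that for all
sufficiently large primes `p` and every subgroup `G ≤ 𝔽_p^*` of size `|G| > C_r·p^(1-1/(2r))`,
the group `G` contains at least `c_r·(|G|/p)^r·p·|G|` non-trivial `(r+1)`-term arithmetic
progressions, counted as pairs `(a,b)` with `b ≠ 0` and `a, a+b, …, a+rb ∈ G`. -/
theorem count_progressions_in_multiplicative_groups (r : ℕ) (hr : 0 < r) :
    ∃ c : ℝ, 0 < c ∧ ∃ C : ℝ, 0 < C ∧ ∃ p₀ : ℕ, ∀ p : ℕ, p.Prime → p > p₀ →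
      ∀ G : Subgroup (ZMod p)ˣ,
        (Nat.card G : ℝ) > C * (p : ℝ) ^ ((1 : ℝ) - 1 / (2 * (r : ℝ))) →
        (Nat.card {ab : ZMod p × ZMod p //
            ab.2 ≠ 0 ∧ ∀ i : ℕ, i ≤ r →
              ab.1 + (i : ZMod p) * ab.2 ∈ Units.val '' (G : Set (ZMod p)ˣ)} : ℝ) ≥
          c * ((Nat.card G : ℝ) / (p : ℝ)) ^ r * (p : ℝ) * (Nat.card G : ℝ) := by
  refine ⟨1 / 2, by norm_num, 4 * r, by positivity, r, fun p hp hrp G hG => ?_⟩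
  have : Fact p.Prime := ⟨hp⟩
  simpa only [Nat.card_zmod] using count_progressions_in_multiplicative_groups_general p hr.ne' hrp
    G (by rwa [Nat.card_zmod])
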